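/- arXiv:2509.24687 — 5 statements merged into one kernel-verified Lean document; each statement's English description precedes it below -/
import Mathlib

section
/- For every density ρ > 0 and every scale parameter α > 0, the Gaussian polarization of the rescaled hexagonal lattice exceeds that of the rescaled honeycomb structure: the infimum over z ∈ ℝ² of ∑_{λ ∈ Λ₂} exp(−πα‖ρ^{-1/2}λ − z‖²) is strictly greater than the infimum over z ∈ ℝ² of ∑_{γ ∈ Γ₂} exp(−πα‖ρ^{-1/2}γ − z‖²). -/
open Real MeasureTheory
open scoped RealInnerProductSpace ENNReal

/-- The vector `(x, y)` in the Euclidean plane `ℝ²`. -/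
noncomputable def vec2 (x y : ℝ) : EuclideanSpace ℝ (Fin 2) :=
  (WithLp.equiv 2 (Fin 2 → ℝ)).symm ![x, y]

/-- The hexagonal lattice `Λ₂` of density 1:
`Λ₂ = {√(2/√3)·(k + l/2, l·√3/2) : (k,l) ∈ ℤ²}`. -/
noncomputable def hexLattice : Set (EuclideanSpace ℝ (Fin 2)) :=
  {p | ∃ k l : ℤ,
    p = Real.sqrt (2 / Real.sqrt 3) • vec2 ((k : ℝ) + (l : ℝ) / 2) ((l : ℝ) * (Real.sqrt 3 / 2))}

/-- The deep hole `z₀ = √(2/√3)·(1/2, 1/(2√3))` of the hexagonal lattice. -/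
noncomputable def deepHole : EuclideanSpace ℝ (Fin 2) :=
  Real.sqrt (2 / Real.sqrt 3) • vec2 (1 / 2) (1 / (2 * Real.sqrt 3))

/-- The honeycomb structure `Γ₂ = √2·(Λ₂ ∪ (Λ₂ + z₀))` of density 1. -/
noncomputable def honeycomb : Set (EuclideanSpace ℝ (Fin 2)) :=
  (fun p => Real.sqrt 2 • p) '' (hexLattice ∪ (fun p => p + deepHole) '' hexLattice)

open HurwitzZeta in
/-- theta combination for the hexagonal lattice -/
noncomputable def hexK (t x y : ℝ) : ℝ :=
  evenKernel (x : UnitAddCircle) t * evenKernel (y : UnitAddCircle) (3 * t) +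
  evenKernel ((x + 1 / 2 : ℝ) : UnitAddCircle) t * evenKernel ((y + 1 / 2 : ℝ) : UnitAddCircle) (3 * t)

lemma aux_tail {f : ℕ → ℝ} {s A r : ℝ} (hf : HasSum f s) (hr0 : 0 ≤ r) (hr : r < 1)
    (h : ∀ n, |f n| ≤ A * r ^ n) : |s| ≤ A / (1 - r) := by
  have hg := (hasSum_geometric_of_lt_one hr0 hr).mul_left A
  have := hf.norm_le_of_bounded hg h
  rwa [div_eq_mul_inv]

lemma aux_abs (c E : ℝ) (hc : |c| ≤ 1) (hE : 0 ≤ E) : |2 * c * E| ≤ 2 * E := by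
  rw [abs_mul, abs_mul, abs_of_nonneg hE, abs_two]
  nlinarith [abs_nonneg c]

lemma aux_pow_le (U : ℝ) (h0 : 0 ≤ U) (h1 : U ≤ 1) {a b : ℕ} (h : a ≤ b) : U ^ b ≤ U ^ a :=
  pow_le_pow_of_le_one h0 h1 h

open HurwitzZeta in
lemma aux_cos1 (a t : ℝ) (ht : 0 < t) :
    |cosKernel (a : UnitAddCircle) t - 1| ≤ 2 * rexp (-π * t) / (1 - rexp (-π * t)) := by
  have h1 : rexp (-π * t) < 1 := by
    rw [Real.exp_lt_one_iff]; have := mul_pos Real.pi_pos ht; linarith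
  refine aux_tail (hasSum_nat_cosKernel₀ a ht) (Real.exp_pos _).le h1 (fun n => ?_)
  refine (aux_abs _ _ (Real.abs_cos_le_one _) (Real.exp_pos _).le).trans ?_
  have : rexp (-π * (n + 1) ^ 2 * t) = rexp (-π * t) ^ ((n + 1) ^ 2) := by
    rw [← Real.exp_nat_mul]; push_cast; ring_nf
  rw [this, mul_assoc, ← pow_succ']
  have := aux_pow_le (rexp (-π * t)) (Real.exp_pos _).le h1.le
    (show n + 1 ≤ (n + 1) ^ 2 by nlinarith)
  linarith

open HurwitzZeta in
lemma aux_cos2 (a t : ℝ) (ht : 0 < t) :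
    |cosKernel (a : UnitAddCircle) t - 1 - 2 * rexp (-π * t) * Real.cos (2 * π * a)| ≤
      2 * rexp (-π * t) ^ 4 / (1 - rexp (-π * t)) := by
  have h1 : rexp (-π * t) < 1 := by
    rw [Real.exp_lt_one_iff]; have := mul_pos Real.pi_pos ht; linarith
  have hs := (hasSum_nat_add_iff' 1).2 (hasSum_nat_cosKernel₀ a ht)
  have e : cosKernel (a : UnitAddCircle) t - 1 - 2 * rexp (-π * t) * Real.cos (2 * π * a)
    = cosKernel (a : UnitAddCircle) t - 1 - ∑ i ∈ Finset.range 1,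
      2 * Real.cos (2 * π * a * ((i : ℕ) + 1)) * rexp (-π * ((i : ℕ) + 1) ^ 2 * t) := by
    simp; ring
  rw [e]
  refine aux_tail hs (Real.exp_pos _).le h1 (fun n => ?_)
  refine (aux_abs _ _ (Real.abs_cos_le_one _) (Real.exp_pos _).le).trans ?_
  have : rexp (-π * (((n + 1 : ℕ) : ℝ) + 1) ^ 2 * t) = rexp (-π * t) ^ ((n + 2) ^ 2) := by
    rw [← Real.exp_nat_mul]; push_cast; ring_nf
  rw [this, mul_assoc, ← pow_add]
  have := aux_pow_le (rexp (-π * t)) (Real.exp_pos _).le h1.le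
    (show 4 + n ≤ (n + 2) ^ 2 by nlinarith)
  linarith

lemma aux_congr {ι : Type*} {f g : ι → ℝ} {s : ℝ} (hf : HasSum f s) (h : ∀ n, g n = f n) :
    HasSum g s := by
  have : g = f := funext h
  rw [this]; exact hf

open HurwitzZeta in
lemma aux_split (a t : ℝ) (ht : 0 < t) : ∃ S : ℝ,
    HasSum (fun k : ℕ => 2 * Real.cos (2 * π * a * (2 * k + 1)) * rexp (-π * (2 * k + 1) ^ 2 * t)) S ∧
    cosKernel (a : UnitAddCircle) t = cosKernel ((2 * a : ℝ) : UnitAddCircle) (4 * t) + S ∧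
    cosKernel ((a + 1 / 2 : ℝ) : UnitAddCircle) t =
      cosKernel ((2 * a : ℝ) : UnitAddCircle) (4 * t) - S := by
  have h1 := hasSum_nat_cosKernel₀ a ht
  have h2 := hasSum_nat_cosKernel₀ (a + 1 / 2) ht
  have h3 := hasSum_nat_cosKernel₀ (2 * a) (show 0 < 4 * t by linarith)
  have hS := h1.summable.comp_injective (i := fun k : ℕ => 2 * k) (fun x y h => by simpa using h)
  obtain ⟨S, hS⟩ := hS
  have hS' : HasSum (fun k : ℕ => 2 * Real.cos (2 * π * a * (2 * k + 1)) *
      rexp (-π * (2 * k + 1) ^ 2 * t)) S := by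
    refine aux_congr hS (fun k => ?_)
    simp
  refine ⟨S, hS', ?_, ?_⟩
  · have := HasSum.even_add_odd (f := fun n : ℕ ↦ 2 * Real.cos (2 * π * a * (n + 1)) *
      rexp (-π * (n + 1) ^ 2 * t)) hS
      (m' := cosKernel ((2 * a : ℝ) : UnitAddCircle) (4 * t) - 1) (by
        refine aux_congr h3 (fun k => ?_)
        push_cast
        congr 1
        · congr 2; ring
        · congr 1; ring)
    have := h1.unique this
    linarith
  · have := HasSum.even_add_odd (f := fun n : ℕ ↦ 2 * Real.cos (2 * π * (a + 1 / 2) * (n + 1)) *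
      rexp (-π * (n + 1) ^ 2 * t)) (m := -S)
      (m' := cosKernel ((2 * a : ℝ) : UnitAddCircle) (4 * t) - 1)
      (by
        refine aux_congr hS'.neg (fun k => ?_)
        have e : 2 * π * (a + 1 / 2) * (((2 * k : ℕ) : ℝ) + 1) =
          2 * π * a * (2 * k + 1) + π + (k : ℤ) * (2 * π) := by push_cast; ring
        rw [e, Real.cos_add_int_mul_two_pi, Real.cos_add_pi]
        push_cast; ring)
      (by
        refine aux_congr h3 (fun k => ?_)
        have e : 2 * π * (a + 1 / 2) * (((2 * k + 1 : ℕ) : ℝ) + 1) =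
          2 * π * (2 * a) * (k + 1) + ((k + 1 : ℕ) : ℤ) * (2 * π) := by push_cast; ring
        rw [e, Real.cos_add_int_mul_two_pi]
        push_cast
        congr 2; ring)
    have := h2.unique this
    linarith

lemma aux_S (a t S : ℝ) (ht : 0 < t)
    (hS : HasSum (fun k : ℕ => 2 * Real.cos (2 * π * a * (2 * k + 1)) *
      rexp (-π * (2 * k + 1) ^ 2 * t)) S) :
    ∃ r : ℝ, S = 2 * rexp (-π * t) * (Real.cos (2 * π * a) + r) ∧
      |r| ≤ rexp (-π * (4 * t)) ^ 2 / (1 - rexp (-π * (4 * t)) ^ 2) := by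
  set W := rexp (-π * (4 * t)) with hW
  have hW0 : 0 < W := Real.exp_pos _
  have h1 : W < 1 := by
    rw [hW, Real.exp_lt_one_iff]; have := mul_pos Real.pi_pos ht; linarith
  have hV : 0 < rexp (-π * t) := Real.exp_pos _
  have hs := ((hasSum_nat_add_iff' 1).2 hS).mul_left ((2 * rexp (-π * t))⁻¹)
  refine ⟨_, ?_, aux_tail hs (sq_nonneg W) (by nlinarith) (fun n => ?_)⟩
  · simp
    field_simp
    ring
  · have e : rexp (-π * (2 * ((n + 1 : ℕ) : ℝ) + 1) ^ 2 * t) =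
      rexp (-π * t) * W ^ ((n + 1) * (n + 2)) := by
      rw [hW, ← Real.exp_nat_mul, ← Real.exp_add]; push_cast; ring_nf
    rw [e]
    have e2 : (2 * rexp (-π * t))⁻¹ * (2 * Real.cos (2 * π * a * (2 * ((n + 1 : ℕ) : ℝ) + 1)) *
      (rexp (-π * t) * W ^ ((n + 1) * (n + 2)))) =
      Real.cos (2 * π * a * (2 * ((n + 1 : ℕ) : ℝ) + 1)) * W ^ ((n + 1) * (n + 2)) := by
      field_simp
    rw [e2, abs_mul, abs_of_pos (pow_pos hW0 _), ← pow_mul, ← pow_add]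
    have h3 := aux_pow_le W hW0.le h1.le (show 2 + 2 * n ≤ (n + 1) * (n + 2) by nlinarith)
    have h4 := Real.abs_cos_le_one (2 * π * a * (2 * ((n + 1 : ℕ) : ℝ) + 1))
    have h5 := pow_pos hW0 ((n + 1) * (n + 2))
    nlinarith

open HurwitzZeta in
lemma hexK_poisson (t x y : ℝ) (ht : 0 < t) : ∃ S S' : ℝ,
    HasSum (fun k : ℕ => 2 * Real.cos (2 * π * x * (2 * k + 1)) *
      rexp (-π * (2 * k + 1) ^ 2 * (1 / t))) S ∧
    HasSum (fun k : ℕ => 2 * Real.cos (2 * π * y * (2 * k + 1)) *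
      rexp (-π * (2 * k + 1) ^ 2 * (1 / (3 * t)))) S' ∧
    √3 * t / 2 * hexK t x y = cosKernel ((2 * x : ℝ) : UnitAddCircle) (4 * (1 / t)) *
      cosKernel ((2 * y : ℝ) : UnitAddCircle) (4 * (1 / (3 * t))) + S * S' := by
  obtain ⟨S, hS, h1, h2⟩ := aux_split x (1 / t) (by positivity)
  obtain ⟨S', hS', h3, h4⟩ := aux_split y (1 / (3 * t)) (by positivity)
  refine ⟨S, S', hS, hS', ?_⟩
  unfold hexK
  rw [evenKernel_functional_equation, evenKernel_functional_equation _ (3 * t),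
    evenKernel_functional_equation _ t,
    evenKernel_functional_equation ((y + 1 / 2 : ℝ) : UnitAddCircle) (3 * t), h1, h2, h3, h4,
    ← Real.sqrt_eq_rpow, ← Real.sqrt_eq_rpow, Real.sqrt_mul (by norm_num)]
  have : √t * √t = t := Real.mul_self_sqrt ht.le
  have h5 : 0 < √t := Real.sqrt_pos.2 ht
  have h6 : 0 < √3 := by positivity
  field_simp
  have : √t ^ 2 = t := Real.sq_sqrt ht.le
  rw [this]
  field_simp
  ring

lemma aux_num (U P P' r r' C C' D : ℝ) (h0 : 0 < U) (h1 : U ≤ 3 / 8)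
    (hP : |P - 1| ≤ 2 * U ^ 3 / (1 - U ^ 3))
    (hP' : |P' - 1 - 2 * U * D| ≤ 2 * U ^ 4 / (1 - U))
    (hr : |r| ≤ (U ^ 3) ^ 2 / (1 - (U ^ 3) ^ 2)) (hr' : |r'| ≤ U ^ 2 / (1 - U ^ 2))
    (hC : |C| ≤ 1) (hC' : |C'| ≤ 1) (hD : |D| ≤ 1) :
    |P * P' + 4 * U * (C + r) * (C' + r') - (1 + 2 * U * D + 4 * U * C * C')| ≤ 12 * U ^ 3 := by
  have u2 : U ^ 2 ≤ 9 / 64 := by nlinarith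
  have u3 : U ^ 3 ≤ 27 / 512 := by nlinarith [pow_pos h0 2]
  have p2 := pow_pos h0 2
  have p3 := pow_pos h0 3
  have hP1 : |P - 1| ≤ 2.12 * U ^ 3 := by
    refine hP.trans ?_
    rw [div_le_iff₀ (by linarith)]; nlinarith
  have hP1' : |P' - 1 - 2 * U * D| ≤ 1.2 * U ^ 3 := by
    refine hP'.trans ?_
    rw [div_le_iff₀ (by linarith)]; nlinarith
  have hr1' : |r'| ≤ 1.17 * U ^ 2 := by
    refine hr'.trans ?_
    rw [div_le_iff₀ (by linarith)]; nlinarith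
  have hr1 : |r| ≤ 0.03 * U ^ 2 := by
    refine hr.trans ?_
    have q : (U ^ 3) ^ 2 ≤ 27 / 512 * U ^ 3 := by nlinarith
    have q' : U ^ 3 ≤ 3 / 8 * U ^ 2 := by nlinarith
    have q3 : (U ^ 3) ^ 2 ≤ 0.1 := by nlinarith
    rw [div_le_iff₀ (by linarith)]; nlinarith
  have hPP : |P'| ≤ 1.82 := by
    have e : P' = (P' - 1 - 2 * U * D) + 1 + 2 * U * D := by ring
    have a1 := abs_le.1 hP1'
    have a2 := abs_le.1 hD
    rw [abs_le]; constructor <;> nlinarith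
  have e : P * P' + 4 * U * (C + r) * (C' + r') - (1 + 2 * U * D + 4 * U * C * C') =
    (P - 1) * P' + (P' - 1 - 2 * U * D) + 4 * U * (r * C' + C * r' + r * r') := by ring
  rw [e]
  have b1 : |(P - 1) * P'| ≤ 2.12 * U ^ 3 * 1.82 := by
    rw [abs_mul]; exact mul_le_mul hP1 hPP (abs_nonneg _) (by positivity)
  have c1 : |r * C'| ≤ 0.03 * U ^ 2 * 1 := by
    rw [abs_mul]; exact mul_le_mul hr1 hC' (abs_nonneg _) (by positivity)
  have c2 : |C * r'| ≤ 1 * (1.17 * U ^ 2) := by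
    rw [abs_mul]; exact mul_le_mul hC hr1' (abs_nonneg _) (by positivity)
  have c3 : |r * r'| ≤ 0.03 * U ^ 2 * (1.17 * U ^ 2) := by
    rw [abs_mul]; exact mul_le_mul hr1 hr1' (abs_nonneg _) (by positivity)
  have c4 : |r * C' + C * r' + r * r'| ≤ 1.3 * U ^ 2 := by
    refine (abs_add_three _ _ _).trans ?_
    nlinarith
  have b3 : |4 * U * (r * C' + C * r' + r * r')| ≤ 4 * U * (1.3 * U ^ 2) := by
    rw [abs_mul, abs_of_pos (by positivity : 0 < 4 * U)]
    exact mul_le_mul_of_nonneg_left c4 (by positivity)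
  refine (abs_add_three _ _ _).trans ?_
  nlinarith

lemma hexK_approx (t x y : ℝ) (ht : 0 < t) (hU : rexp (-π * (4 * (1 / (3 * t)))) ≤ 3 / 8) :
    |√3 * t / 2 * hexK t x y - (1 + 2 * rexp (-π * (4 * (1 / (3 * t)))) * Real.cos (2 * π * (2 * y))
      + 4 * rexp (-π * (4 * (1 / (3 * t)))) * Real.cos (2 * π * x) * Real.cos (2 * π * y))|
    ≤ 12 * rexp (-π * (4 * (1 / (3 * t)))) ^ 3 := by
  obtain ⟨S, S', hS, hS', h⟩ := hexK_poisson t x y ht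
  obtain ⟨r, hr, hr2⟩ := aux_S x (1 / t) S (by positivity) hS
  obtain ⟨r', hr', hr2'⟩ := aux_S y (1 / (3 * t)) S' (by positivity) hS'
  have hP := aux_cos1 (2 * x) (4 * (1 / t)) (by positivity)
  have hP' := aux_cos2 (2 * y) (4 * (1 / (3 * t))) (by positivity)
  have e3 : rexp (-π * (4 * (1 / t))) = rexp (-π * (4 * (1 / (3 * t)))) ^ 3 := by
    rw [← Real.exp_nat_mul]; congr 1; push_cast; field_simp
  rw [e3] at hP hr2
  have eU : rexp (-π * (1 / t)) * rexp (-π * (1 / (3 * t))) = rexp (-π * (4 * (1 / (3 * t)))) := by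
    rw [← Real.exp_add]; congr 1; field_simp; ring
  have eS : S * S' = 4 * rexp (-π * (4 * (1 / (3 * t)))) * (Real.cos (2 * π * x) + r) *
      (Real.cos (2 * π * y) + r') := by
    rw [hr, hr', ← eU]; ring
  rw [h, eS]
  exact aux_num _ _ _ _ _ _ _ _ (Real.exp_pos _) hU hP hP' hr2 hr2' (Real.abs_cos_le_one _)
    (Real.abs_cos_le_one _) (Real.abs_cos_le_one _)

/-- lower bound valid everywhere -/
lemma hexK_lower (t x y : ℝ) (ht : 0 < t) (hU : rexp (-π * (4 * (1 / (3 * t)))) ≤ 3 / 8) :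
    1 - 3 * rexp (-π * (4 * (1 / (3 * t)))) - 12 * rexp (-π * (4 * (1 / (3 * t)))) ^ 3
      ≤ √3 * t / 2 * hexK t x y := by
  have h := (abs_le.1 (hexK_approx t x y ht hU)).1
  have e : 2 * π * (2 * y) = 2 * (2 * π * y) := by ring
  rw [e, Real.cos_two_mul] at h
  set U := rexp (-π * (4 * (1 / (3 * t))))
  have hU0 : 0 < U := Real.exp_pos _
  set X := Real.cos (2 * π * x)
  set Y := Real.cos (2 * π * y)
  have hX : X ^ 2 ≤ 1 := by
    have := Real.cos_sq_le_one (2 * π * x); exact this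
  have : 0 ≤ U * (2 * (2 * Y ^ 2 - 1) + 4 * X * Y + 3) := by
    apply mul_nonneg hU0.le
    nlinarith [sq_nonneg (2 * Y + X)]
  nlinarith

/-- upper bound at a deep hole -/
lemma hexK_upper (t : ℝ) (ht : 0 < t) (hU : rexp (-π * (4 * (1 / (3 * t)))) ≤ 3 / 8) :
    √3 * t / 2 * hexK t (1 / 2) (1 / 6) ≤
    1 - 3 * rexp (-π * (4 * (1 / (3 * t)))) + 12 * rexp (-π * (4 * (1 / (3 * t)))) ^ 3 := by
  have h := (abs_le.1 (hexK_approx t (1 / 2) (1 / 6) ht hU)).2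
  have e : 2 * π * (2 * (1 / 6)) = 2 * (π / 3) := by ring
  have e1 : 2 * π * (1 / 2) = π := by ring
  have e2 : 2 * π * (1 / 6) = π / 3 := by ring
  rw [e, Real.cos_two_mul, e1, e2, Real.cos_pi, Real.cos_pi_div_three] at h
  nlinarith

open HurwitzZeta in
lemma hexK_two (t : ℝ) : hexK t 1 (1 / 3) = hexK t (1 / 2) (1 / 6) := by
  unfold hexK
  have a0 : (1 : ℝ) = (1 / 2 : ℝ) + 1 / 2 := by norm_num
  have a1 : (((1 : ℝ) + 1 / 2 : ℝ) : UnitAddCircle) = ((1 / 2 : ℝ) : UnitAddCircle) := by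
    rw [add_comm]; exact AddCircle.coe_add_period 1 (1 / 2 : ℝ)
  have a2 : ((1 / 6 + 1 / 2 : ℝ) : UnitAddCircle) = -((1 / 3 : ℝ) : UnitAddCircle) := by
    rw [← AddCircle.coe_neg, ← AddCircle.coe_add_period 1 (-(1 / 3) : ℝ)]; norm_num
  have a3 : ((1 / 3 + 1 / 2 : ℝ) : UnitAddCircle) = -((1 / 6 : ℝ) : UnitAddCircle) := by
    rw [← AddCircle.coe_neg, ← AddCircle.coe_add_period 1 (-(1 / 6) : ℝ)]; norm_num
  rw [a1, a2, a3, evenKernel_neg, evenKernel_neg, ← a0]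
  ring

open HurwitzZeta in
lemma even_upper (a t : ℝ) (ha : 0 ≤ a) (ha2 : a ≤ 1 / 2) (ht : 0 < t) :
    evenKernel (a : UnitAddCircle) t ≤
      rexp (-π * t * a ^ 2) * (1 + rexp (-π * t * (1 - 2 * a))) / (1 - rexp (-π * t)) := by
  have hpt := mul_pos Real.pi_pos ht
  have h1 : rexp (-π * t) < 1 := by
    rw [Real.exp_lt_one_iff]; linarith
  have hg := hasSum_geometric_of_lt_one (Real.exp_pos (-π * t)).le h1
  have hg1 := hg.mul_left (rexp (-π * t * a ^ 2))
  have hg2 := hg.mul_left (rexp (-π * t * a ^ 2) * rexp (-π * t * (1 - 2 * a)))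
  have hs := hg1.int_rec hg2
  have := hasSum_le (fun n => ?_) (hasSum_int_evenKernel a ht) hs
  · refine this.trans (le_of_eq ?_)
    rw [div_eq_mul_inv]; ring
  · cases n with
    | ofNat n =>
      show _ ≤ rexp (-π * t * a ^ 2) * rexp (-π * t) ^ n
      rw [← Real.exp_nat_mul, ← Real.exp_add, Real.exp_le_exp]
      have hn : (n : ℝ) ≤ (n : ℝ) ^ 2 := by exact_mod_cast (show n ≤ n ^ 2 by nlinarith)
      have : (0 : ℝ) ≤ n := n.cast_nonneg
      have : 0 ≤ π * t * ((n : ℝ) ^ 2 - n + 2 * (a * n)) := by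
        apply mul_nonneg hpt.le
        have := mul_nonneg ha this
        linarith
      simp only [Int.ofNat_eq_natCast, Int.cast_natCast]
      nlinarith
    | negSucc n =>
      show _ ≤ rexp (-π * t * a ^ 2) * rexp (-π * t * (1 - 2 * a)) * rexp (-π * t) ^ n
      rw [← Real.exp_nat_mul, ← Real.exp_add, ← Real.exp_add, Real.exp_le_exp]
      have h0 : (0 : ℝ) ≤ n := n.cast_nonneg
      rw [Int.cast_negSucc]
      push_cast
      have : 0 ≤ π * t * ((n : ℝ) * (n + 1 - 2 * a)) := by
        apply mul_nonneg hpt.le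
        apply mul_nonneg h0
        linarith
      nlinarith

lemma aux_num2 (w A B C D v1 v3 : ℝ) (hw : 0 < w) (hw1 : w ≤ 1 / 49) (h13 : v1 * v3 = w)
    (hv1 : 0 < v1) (hv3 : 0 < v3) (hB0 : 0 ≤ B) (hD0 : 0 ≤ D)
    (hA : A ≤ v3 * (1 + 1) / (1 - w ^ 3)) (hB : B ≤ v1 * (1 + w ^ 6) / (1 - w ^ 9))
    (hC : C ≤ 1 * (1 + w ^ 3) / (1 - w ^ 3)) (hD : D ≤ w * (1 + w ^ 3) / (1 - w ^ 9)) :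
    A * B + C * D ≤ 3.2 * w := by
  have w3 : w ^ 3 ≤ 1 / 1000 := by
    calc w ^ 3 ≤ (1 / 49) ^ 3 := pow_le_pow_left₀ hw.le hw1 3
      _ ≤ _ := by norm_num
  have w6 : w ^ 6 ≤ 1 / 1000 := (aux_pow_le w hw.le (by linarith) (by norm_num)).trans w3
  have w9 : w ^ 9 ≤ 1 / 1000 := (aux_pow_le w hw.le (by linarith) (by norm_num)).trans w3
  have p3 := pow_pos hw 3
  have p6 := pow_pos hw 6
  have p9 := pow_pos hw 9
  have hA' : A ≤ 2.01 * v3 := hA.trans (by rw [div_le_iff₀ (by linarith)]; nlinarith)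
  have hB' : B ≤ 1.01 * v1 := hB.trans (by rw [div_le_iff₀ (by linarith)]; nlinarith)
  have hC' : C ≤ 1.01 := hC.trans (by rw [div_le_iff₀ (by linarith)]; nlinarith)
  have hD' : D ≤ 1.01 * w := hD.trans (by rw [div_le_iff₀ (by linarith)]; nlinarith)
  have c1 : A * B ≤ 2.01 * v3 * (1.01 * v1) := mul_le_mul hA' hB' hB0 (by positivity)
  have c2 : C * D ≤ 1.01 * (1.01 * w) := mul_le_mul hC' hD' hD0 (by norm_num)
  nlinarith

open HurwitzZeta in
lemma even_nonneg (a t : ℝ) (ht : 0 < t) : 0 ≤ evenKernel (a : UnitAddCircle) t :=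
  (hasSum_int_evenKernel a ht).nonneg (fun _ => (Real.exp_pos _).le)

open HurwitzZeta in
/-- direct upper bound at a deep hole -/
lemma hexK_upper2 (t : ℝ) (ht : 0 < t) (hw : rexp (-π * t / 3) ≤ 1 / 49) :
    hexK t (1 / 2) (1 / 6) ≤ 3.2 * rexp (-π * t / 3) := by
  have a2 : ((1 / 6 + 1 / 2 : ℝ) : UnitAddCircle) = -((1 / 3 : ℝ) : UnitAddCircle) := by
    rw [← AddCircle.coe_neg, ← AddCircle.coe_add_period 1 (-(1 / 3) : ℝ)]; norm_num
  have a0 : ((1 / 2 + 1 / 2 : ℝ) : UnitAddCircle) = ((0 : ℝ) : UnitAddCircle) := by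
    rw [← AddCircle.coe_add_period 1 (0 : ℝ)]; norm_num
  unfold hexK
  rw [a2, evenKernel_neg, a0]
  have t3 : 0 < 3 * t := by linarith
  have hA := even_upper (1 / 2) t (by norm_num) (by norm_num) ht
  have hB := even_upper (1 / 6) (3 * t) (by norm_num) (by norm_num) t3
  have hC := even_upper 0 t (by norm_num) (by norm_num) ht
  have hD := even_upper (1 / 3) (3 * t) (by norm_num) (by norm_num) t3
  have e3 : rexp (-π * t) = rexp (-π * t / 3) ^ 3 := by
    rw [← Real.exp_nat_mul]; congr 1; push_cast; ring
  have e9 : rexp (-π * (3 * t)) = rexp (-π * t / 3) ^ 9 := by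
    rw [← Real.exp_nat_mul]; congr 1; push_cast; ring
  have e6 : rexp (-π * (3 * t) * (1 - 2 * (1 / 6))) = rexp (-π * t / 3) ^ 6 := by
    rw [← Real.exp_nat_mul]; congr 1; push_cast; ring
  have e33 : rexp (-π * (3 * t) * (1 - 2 * (1 / 3))) = rexp (-π * t / 3) ^ 3 := by
    rw [← Real.exp_nat_mul]; congr 1; push_cast; ring
  have e1 : rexp (-π * (3 * t) * (1 / 3) ^ 2) = rexp (-π * t / 3) := by
    congr 1; ring
  have e30 : rexp (-π * t * (1 - 2 * 0)) = rexp (-π * t / 3) ^ 3 := by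
    rw [← Real.exp_nat_mul]; congr 1; push_cast; ring
  have e00 : rexp (-π * t * 0 ^ 2) = 1 := by simp
  have e0 : rexp (-π * t * (1 - 2 * (1 / 2))) = 1 := by simp
  rw [e0, e3] at hA
  rw [e6, e9] at hB
  rw [e00, e30, e3] at hC
  rw [e1, e33, e9] at hD
  refine aux_num2 _ _ _ _ _ (rexp (-π * (3 * t) * (1 / 6) ^ 2)) (rexp (-π * t * (1 / 2) ^ 2))
    (Real.exp_pos _) hw ?_ (Real.exp_pos _) (Real.exp_pos _)
    (even_nonneg _ _ t3) (even_nonneg _ _ t3) hA hB hC hD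
  rw [← Real.exp_add]; congr 1; ring

lemma aux_round (x : ℝ) : ∃ (n n' : ℤ) (d : ℝ), 0 ≤ d ∧ d ≤ 1 / 2 ∧ (n + x) ^ 2 = d ^ 2 ∧
    (n' + (x + 1 / 2)) ^ 2 = (1 / 2 - d) ^ 2 := by
  have h := abs_le.1 (abs_sub_round x)
  rcases le_total 0 (x - round x) with h0 | h0
  · refine ⟨-round x, -round x - 1, x - round x, h0, h.2, ?_, ?_⟩ <;> push_cast <;> ring
  · refine ⟨-round x, -round x, round x - x, by linarith, by linarith [h.1], ?_, ?_⟩ <;>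
      push_cast <;> ring

open HurwitzZeta in
lemma even_ge (a t b : ℝ) (n : ℤ) (ht : 0 < t) (h : (n + a) ^ 2 = b) :
    rexp (-π * b * t) ≤ evenKernel (a : UnitAddCircle) t := by
  have := le_hasSum (hasSum_int_evenKernel a ht) n (fun _ _ => (Real.exp_pos _).le)
  rwa [h] at this

lemma hexK_lower2 (t x y : ℝ) (ht : 0 < t) : rexp (-π * t / 3) ≤ hexK t x y := by
  obtain ⟨n, n', d, d0, d1, hn, hn'⟩ := aux_round x
  obtain ⟨m, m', e, e0, e1, hm, hm'⟩ := aux_round y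
  have t3 : 0 < 3 * t := by linarith
  have h1 := even_ge x t _ n ht hn
  have h2 := even_ge y (3 * t) _ m t3 hm
  have h3 := even_ge (x + 1 / 2) t _ n' ht hn'
  have h4 := even_ge (y + 1 / 2) (3 * t) _ m' t3 hm'
  have h12 := mul_le_mul h1 h2 (Real.exp_pos _).le (even_nonneg _ _ ht)
  have h34 := mul_le_mul h3 h4 (Real.exp_pos _).le (even_nonneg _ _ ht)
  rw [← Real.exp_add] at h12 h34
  have hpt := mul_pos Real.pi_pos ht
  unfold hexK
  rcases le_total (d + 3 * e) 1 with h | h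
  · have : rexp (-π * t / 3) ≤ rexp (-π * d ^ 2 * t + -π * e ^ 2 * (3 * t)) := by
      rw [Real.exp_le_exp]
      have : d ^ 2 + 3 * e ^ 2 ≤ 1 / 3 := by nlinarith
      nlinarith
    have := mul_nonneg (even_nonneg (x + 1 / 2) _ ht) (even_nonneg (y + 1 / 2) _ t3)
    linarith
  · have : rexp (-π * t / 3) ≤
        rexp (-π * (1 / 2 - d) ^ 2 * t + -π * (1 / 2 - e) ^ 2 * (3 * t)) := by
      rw [Real.exp_le_exp]
      have : (1 / 2 - d) ^ 2 + 3 * (1 / 2 - e) ^ 2 ≤ 1 / 3 := by nlinarith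
      nlinarith
    have := mul_nonneg (even_nonneg x _ ht) (even_nonneg y _ t3)
    linarith

/-- The key analytic inequality. -/
lemma hexK_key (b : ℝ) (hb : 0 < b) : ∃ L : ℝ, (∀ x y, L ≤ hexK (2 / √3 * b) x y) ∧
    2 * hexK (2 / √3 * (2 * b)) (1 / 2) (1 / 6) < L := by
  have s3 : 0 < √3 := by positivity
  have s3' : √3 ^ 2 = 3 := Real.sq_sqrt (by norm_num)
  have s3u : √3 < 1.7321 := by
    rw [Real.sqrt_lt' (by norm_num)]; norm_num
  have hpi := Real.pi_gt_d2
  have he := Real.exp_one_gt_d9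
  have ht : 0 < 2 / √3 * b := by positivity
  have ht2 : 0 < 2 / √3 * (2 * b) := by positivity
  rcases le_total b (7 / 4) with h | h
  · set u := rexp (-π * (4 * (1 / (3 * (2 / √3 * (2 * b)))))) with hu
    have hu0 : 0 < u := Real.exp_pos _
    have e1 : -π * (4 * (1 / (3 * (2 / √3 * (2 * b))))) = -(π * √3 / (3 * b)) := by
      field_simp; ring
    have hu1 : u ≤ 3 / 8 := by
      have : u ≤ rexp (-1) := by
        rw [hu, Real.exp_le_exp, e1, neg_le_neg_iff, le_div_iff₀ (by positivity)]
        have s3l : 1.732 < √3 := by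
          rw [Real.lt_sqrt (by norm_num)]; norm_num
        nlinarith
      refine this.trans ?_
      rw [Real.exp_neg, inv_le_comm₀ (Real.exp_pos _) (by norm_num)]
      norm_num at he ⊢; linarith
    have hU : rexp (-π * (4 * (1 / (3 * (2 / √3 * b))))) = u ^ 2 := by
      rw [hu, ← Real.exp_nat_mul]; congr 1; push_cast; field_simp
    have hU1 : u ^ 2 ≤ 3 / 8 := by nlinarith
    have up := hexK_upper _ ht2 hu1
    rw [← hu] at up
    refine ⟨(1 - 3 * u ^ 2 - 12 * (u ^ 2) ^ 3) / b, fun x y => ?_, ?_⟩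
    · have lo := hexK_lower _ x y ht (by rw [hU]; exact hU1)
      rw [hU] at lo
      have e : √3 * (2 / √3 * b) / 2 = b := by field_simp
      rw [e] at lo
      rw [div_le_iff₀ hb]; linarith
    · have e : √3 * (2 / √3 * (2 * b)) / 2 = 2 * b := by field_simp
      rw [e] at up
      rw [lt_div_iff₀ hb]
      have u2 : u ^ 2 ≤ 9 / 64 := by nlinarith
      have u5 : u ^ 5 ≤ (3 / 8) ^ 5 := pow_le_pow_left₀ hu0.le hu1 5
      have : 0 < u * (3 - 3 * u - 12 * u ^ 2 - 12 * u ^ 5) := by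
        apply mul_pos hu0; norm_num at u5; linarith
      nlinarith
  · set v := rexp (-π * (2 / √3 * b) / 3) with hv
    have hv0 : 0 < v := Real.exp_pos _
    have hv1 : v ≤ 1 / 7 := by
      have : v ≤ rexp (-2) := by
        have e1 : -π * (2 / √3 * b) / 3 = -(2 * π * b / (3 * √3)) := by field_simp
        rw [hv, Real.exp_le_exp, e1, neg_le_neg_iff, le_div_iff₀ (by positivity)]
        nlinarith
      refine this.trans ?_
      have e2 : rexp 2 = rexp 1 ^ 2 := by rw [← Real.exp_nat_mul]; norm_num
      rw [Real.exp_neg, inv_le_comm₀ (Real.exp_pos _) (by norm_num), e2]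
      norm_num at he ⊢; nlinarith
    have hw : rexp (-π * (2 / √3 * (2 * b)) / 3) = v ^ 2 := by
      rw [hv, ← Real.exp_nat_mul]; congr 1; push_cast; ring
    refine ⟨v, fun x y => hexK_lower2 _ x y ht, ?_⟩
    have up := hexK_upper2 _ ht2 (by rw [hw]; nlinarith)
    rw [hw] at up
    nlinarith

lemma vec2_norm (c x y : ℝ) : ‖c • vec2 x y‖ ^ 2 = c ^ 2 * (x ^ 2 + y ^ 2) := by
  rw [EuclideanSpace.norm_sq_eq]
  simp [vec2, Fin.sum_univ_two, mul_pow, sq_abs]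
  ring

lemma vec2_add (c x y x' y' : ℝ) : c • vec2 x y + c • vec2 x' y' = c • vec2 (x + x') (y + y') := by
  ext i
  fin_cases i <;> simp [vec2] <;> ring

lemma vec2_inj {c x y x' y' : ℝ} (hc : c ≠ 0) (h : c • vec2 x y = c • vec2 x' y') :
    x = x' ∧ y = y' := by
  have h2 := smul_right_injective _ hc h
  have h0 := congrArg (fun v : EuclideanSpace ℝ (Fin 2) => v 0) h2
  have h1 := congrArg (fun v : EuclideanSpace ℝ (Fin 2) => v 1) h2
  simp [vec2] at h0 h1
  exact ⟨h0, h1⟩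

lemma hexc_pos : 0 < √(2 / √3) := by positivity
lemma hexc_sq : √(2 / √3) ^ 2 = 2 / √3 := Real.sq_sqrt (by positivity)

/-- parametrization of the hexagonal lattice by two rectangular lattices -/
noncomputable def hexParam : (ℤ × ℤ) ⊕ (ℤ × ℤ) → hexLattice
  | Sum.inl p => ⟨√(2 / √3) • vec2 p.1 (√3 * p.2), p.1 - p.2, 2 * p.2, by
      push_cast; congr 2 <;> ring⟩
  | Sum.inr p => ⟨√(2 / √3) • vec2 (p.1 + 1 / 2) (√3 * (p.2 + 1 / 2)), p.1 - p.2, 2 * p.2 + 1, by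
      push_cast; congr 2 <;> ring⟩

lemma aux_half (a b : ℤ) (h : (a : ℝ) = b + 1 / 2) : False := by
  have : (2 * a : ℝ) = 2 * b + 1 := by linarith
  have : 2 * a = 2 * b + 1 := by exact_mod_cast this
  omega

lemma hexParam_bij : Function.Bijective hexParam := by
  have s3 : √3 ≠ 0 := by positivity
  constructor
  · rintro (⟨a, b⟩ | ⟨a, b⟩) (⟨a', b'⟩ | ⟨a', b'⟩) h
    · have := vec2_inj hexc_pos.ne' (congrArg Subtype.val h)
      simp [s3] at this
      simp [this]
    · have := vec2_inj hexc_pos.ne' (congrArg Subtype.val h)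
      exact (aux_half _ _ this.1).elim
    · have := vec2_inj hexc_pos.ne' (congrArg Subtype.val h)
      exact (aux_half _ _ this.1.symm).elim
    · have := vec2_inj hexc_pos.ne' (congrArg Subtype.val h)
      simp [s3] at this
      simp [this]
  · rintro ⟨p, k, l, rfl⟩
    rcases Int.even_or_odd' l with ⟨b, rfl | rfl⟩
    · refine ⟨Sum.inl (k + b, b), Subtype.ext ?_⟩
      simp only [hexParam]
      push_cast; congr 2 <;> ring
    · refine ⟨Sum.inr (k + b, b), Subtype.ext ?_⟩
      simp only [hexParam]
      push_cast; congr 2 <;> ring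

open HurwitzZeta in
lemma hex_rect (t x y : ℝ) (ht : 0 < t) :
    HasSum (fun p : ℤ × ℤ => rexp (-π * (p.1 + x) ^ 2 * t) * rexp (-π * (p.2 + y) ^ 2 * (3 * t)))
      (evenKernel (x : UnitAddCircle) t * evenKernel (y : UnitAddCircle) (3 * t)) := by
  have h1 := hasSum_int_evenKernel x ht
  have h2 := hasSum_int_evenKernel y (show 0 < 3 * t by linarith)
  exact h1.mul h2 (h1.summable.mul_of_nonneg h2.summable (fun _ => (Real.exp_pos _).le)
    (fun _ => (Real.exp_pos _).le))

lemma hex_hasSum (b x y : ℝ) (hb : 0 < b) :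
    HasSum (fun l : hexLattice => rexp (-(π * b) *
      ‖(l : EuclideanSpace ℝ (Fin 2)) + √(2 / √3) • vec2 x (√3 * y)‖ ^ 2))
      (hexK (2 / √3 * b) x y) := by
  have ht : 0 < 2 / √3 * b := by positivity
  have s3' : √3 ^ 2 = 3 := Real.sq_sqrt (by norm_num)
  rw [← (Equiv.ofBijective _ hexParam_bij).hasSum_iff]
  apply HasSum.sum
  · refine aux_congr (hex_rect _ x y ht) (fun p => ?_)
    simp only [Function.comp, Equiv.ofBijective_apply, hexParam]
    rw [vec2_add, vec2_norm, hexc_sq, ← Real.exp_add]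
    congr 1
    linear_combination (-(π * b) * (2 / √3) * (p.2 + y) ^ 2) * s3'
  · refine aux_congr (hex_rect _ (x + 1 / 2) (y + 1 / 2) ht) (fun p => ?_)
    simp only [Function.comp, Equiv.ofBijective_apply, hexParam]
    rw [vec2_add, vec2_norm, hexc_sq, ← Real.exp_add]
    congr 1
    linear_combination (-(π * b) * (2 / √3) * (p.2 + 1 / 2 + y) ^ 2) * s3'

lemma deepHole_eq : deepHole = √(2 / √3) • vec2 (1 / 2) (√3 * (1 / 6)) := by
  have s3 : √3 ≠ 0 := by positivity
  have s3' : √3 ^ 2 = 3 := Real.sq_sqrt (by norm_num)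
  unfold deepHole
  congr 2
  field_simp
  rw [s3']; norm_num

lemma norm_scale (s : ℝ) (p : EuclideanSpace ℝ (Fin 2)) : ‖s • p‖ ^ 2 = s ^ 2 * ‖p‖ ^ 2 := by
  rw [norm_smul, mul_pow, Real.norm_eq_abs, sq_abs]

/-- surjective parametrization of the honeycomb -/
noncomputable def honeyParam : hexLattice ⊕ hexLattice → honeycomb
  | Sum.inl p => ⟨√2 • (p : EuclideanSpace ℝ (Fin 2)), _, Or.inl p.2, rfl⟩
  | Sum.inr p => ⟨√2 • ((p : EuclideanSpace ℝ (Fin 2)) + deepHole), _, Or.inr ⟨_, p.2, rfl⟩, rfl⟩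

lemma honeyParam_surj : Function.Surjective honeyParam := by
  rintro ⟨_, _, h | ⟨q, hq, rfl⟩, rfl⟩
  · exact ⟨Sum.inl ⟨_, h⟩, rfl⟩
  · exact ⟨Sum.inr ⟨_, hq⟩, rfl⟩

lemma honey_le (s α : ℝ) (hs : 0 < s) (hα : 0 < α) :
    ∑' g : honeycomb, rexp (-(π * α) *
      ‖s • (g : EuclideanSpace ℝ (Fin 2)) - s • √2 • (-deepHole)‖ ^ 2) ≤
      2 * hexK (2 / √3 * (2 * (α * s ^ 2))) (1 / 2) (1 / 6) := by
  set f : honeycomb → ℝ := fun g => rexp (-(π * α) *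
      ‖s • (g : EuclideanSpace ℝ (Fin 2)) - s • √2 • (-deepHole)‖ ^ 2) with hf
  have hb : 0 < 2 * (α * s ^ 2) := by positivity
  have h2 : √2 ^ 2 = 2 := Real.sq_sqrt (by norm_num)
  have key : HasSum (f ∘ honeyParam) (hexK (2 / √3 * (2 * (α * s ^ 2))) (1 / 2) (1 / 6) +
      hexK (2 / √3 * (2 * (α * s ^ 2))) 1 (1 / 3)) := by
    apply HasSum.sum
    · refine aux_congr (hex_hasSum _ (1 / 2) (1 / 6) hb) (fun p => ?_)
      simp only [Function.comp, hf, honeyParam]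
      rw [← smul_sub, ← smul_sub, sub_neg_eq_add, norm_scale, norm_scale, h2, deepHole_eq]
      congr 1; ring
    · refine aux_congr (hex_hasSum _ 1 (1 / 3) hb) (fun p => ?_)
      simp only [Function.comp, hf, honeyParam]
      rw [← smul_sub, ← smul_sub, sub_neg_eq_add, norm_scale, norm_scale, h2, deepHole_eq,
        add_assoc, vec2_add]
      have e1 : (1 / 2 + 1 / 2 : ℝ) = 1 := by norm_num
      have e2 : √3 * (1 / 6) + √3 * (1 / 6) = √3 * (1 / 3) := by ring
      rw [e1, e2]
      congr 1; ring
  rw [hexK_two, ← two_mul] at key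
  have e : f = (f ∘ honeyParam) ∘ Function.surjInv honeyParam_surj := by
    funext g
    simp [Function.surjInv_eq]
  have hinj := Function.injective_surjInv honeyParam_surj
  have hsum : Summable f := by
    rw [e]; exact key.summable.comp_injective hinj
  refine hasSum_le_inj (Function.surjInv honeyParam_surj) hinj
    (fun _ _ => (Real.exp_pos _).le) (fun i => (congrFun e i).le) hsum.hasSum key

lemma exists_coord (s : ℝ) (hs : 0 < s) (z : EuclideanSpace ℝ (Fin 2)) :
    ∃ x y : ℝ, z = s • (-(√(2 / √3) • vec2 x (√3 * y))) := by
  have hc := hexc_pos.ne'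
  have s3 : √3 ≠ 0 := by positivity
  refine ⟨-(z 0 / (s * √(2 / √3))), -(z 1 / (s * √(2 / √3) * √3)), ?_⟩
  generalize √(2 / √3) = c at *
  ext i
  fin_cases i <;> simp [vec2] <;> field_simp

/-- For every density `ρ > 0` and every scale `α > 0`, the Gaussian polarization of the
rescaled hexagonal lattice strictly exceeds that of the rescaled honeycomb structure. -/
theorem hex_polarization_gt_honeycomb_polarization (ρ α : ℝ) (hρ : 0 < ρ) (hα : 0 < α) :
    (⨅ z : EuclideanSpace ℝ (Fin 2),
        ∑' l : hexLattice,
          Real.exp (-(Real.pi * α) *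
            ‖ρ ^ (-(1 : ℝ) / 2) • (l : EuclideanSpace ℝ (Fin 2)) - z‖ ^ 2)) >
    (⨅ z : EuclideanSpace ℝ (Fin 2),
        ∑' g : honeycomb,
          Real.exp (-(Real.pi * α) *
            ‖ρ ^ (-(1 : ℝ) / 2) • (g : EuclideanSpace ℝ (Fin 2)) - z‖ ^ 2)) := by
  have hs : 0 < ρ ^ (-(1 : ℝ) / 2) := Real.rpow_pos_of_pos hρ _
  generalize ρ ^ (-(1 : ℝ) / 2) = s at *
  obtain ⟨L, hL, hL2⟩ := hexK_key (α * s ^ 2) (by positivity)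
  refine lt_of_lt_of_le (b := L) ?_ (le_ciInf fun z => ?_)
  · refine lt_of_le_of_lt ?_ hL2
    refine le_trans (ciInf_le ⟨0, ?_⟩ (s • √2 • (-deepHole))) (honey_le s α hs hα)
    rintro _ ⟨z, rfl⟩
    exact tsum_nonneg fun _ => (Real.exp_pos _).le
  · obtain ⟨x, y, rfl⟩ := exists_coord s hs z
    refine (hL x y).trans (le_of_eq ?_)
    rw [← (hex_hasSum (α * s ^ 2) x y (by positivity)).tsum_eq]
    congr 1; funext l
    rw [← smul_sub, sub_neg_eq_add, norm_scale]
    congr 1; ring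
end

section
/- For every α > 0, it holds that ∑_{(k,l) ∈ ℤ²} exp(−(2πα/√3)·Q₁(k,l)) > 2·∑_{(k,l) ∈ ℤ²} exp(−(4πα/√3)·Q₁(k,l)), where Q₁(k,l) = (k−1/3)² + (k−1/3)(l−1/3) + (l−1/3)². -/
open Real

/-- The shifted quadratic form `Q₁(k,l) = (k−1/3)² + (k−1/3)(l−1/3) + (l−1/3)²`. -/
noncomputable def Q1 (k l : ℤ) : ℝ :=
  ((k : ℝ) - 1 / 3) ^ 2 + ((k : ℝ) - 1 / 3) * ((l : ℝ) - 1 / 3) + ((l : ℝ) - 1 / 3) ^ 2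

open HurwitzZeta in
lemma cosK_bound (a : ℝ) {t : ℝ} (ht : 0 < t) (hy : exp (-π * t) ≤ 1 / 2) :
    |cosKernel a t - (1 + 2 * cos (2 * π * a) * exp (-π * t)
      + 2 * cos (4 * π * a) * exp (-π * t) ^ 4)| ≤ 4 * exp (-π * t) ^ 9 := by
  have h := hasSum_nat_cosKernel₀ a ht
  have h2 := (hasSum_nat_add_iff' 2).mpr h
  set y := exp (-π * t) with hyd
  have hy0 : 0 < y := exp_pos _
  have hg : HasSum (fun n : ℕ => 2 * y ^ 9 * (1 / 2 : ℝ) ^ n) (2 * y ^ 9 * 2) :=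
    hasSum_geometric_two.mul_left _
  have hpow : ∀ m : ℕ, exp (-π * (m : ℝ) ^ 2 * t) = y ^ (m ^ 2) := by
    intro m
    rw [hyd, ← exp_nat_mul]; congr 1; push_cast; ring
  have hb : ‖cosKernel a t - 1 - ∑ i ∈ Finset.range 2,
      2 * cos (2 * π * a * (i + 1)) * rexp (-π * (i + 1) ^ 2 * t)‖ ≤ 2 * y ^ 9 * 2 := by
    rw [← h2.tsum_eq]
    apply tsum_of_norm_bounded hg
    intro n
    have e := hpow (n + 2 + 1)
    push_cast at e ⊢
    rw [e, norm_mul, norm_mul, norm_two, Real.norm_eq_abs, Real.norm_of_nonneg (by positivity)]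
    have h1 : y ^ ((n + 2 + 1) ^ 2) ≤ y ^ 9 * (1 / 2) ^ n := by
      calc y ^ ((n + 2 + 1) ^ 2) ≤ y ^ (9 + n) :=
            pow_le_pow_of_le_one hy0.le (by linarith) (by nlinarith)
        _ = y ^ 9 * y ^ n := pow_add _ _ _
        _ ≤ _ := by gcongr
    have h3 := abs_cos_le_one (2 * π * a * (n + 2 + 1))
    have h4 : 0 ≤ y ^ ((n + 2 + 1) ^ 2) := by positivity
    nlinarith
  rw [Finset.sum_range_succ, Finset.sum_range_one, Real.norm_eq_abs] at hb
  have e1 := hpow 1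
  have e2 := hpow 2
  norm_num at e1 e2 hb ⊢
  rw [e2] at hb
  rw [show 2 * π * a * 2 = 4 * π * a by ring, show -(π * t) = -π * t by ring, ← hyd] at hb
  convert hb using 1
  · congr 1; ring
  · ring

open HurwitzZeta in
lemma cosK_bound' (a : ℝ) {t : ℝ} (ht : 0 < t) (hy : exp (-π * t) ≤ 1 / 2) :
    |cosKernel a t - (1 + 2 * cos (2 * π * a) * exp (-π * t))| ≤ 4 * exp (-π * t) ^ 4 := by
  have h := cosK_bound a ht hy
  set y := exp (-π * t) with hyd
  have hy0 : 0 < y := exp_pos _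
  have h5 : y ^ 5 ≤ (1 / 2) ^ 5 := by gcongr
  have h9 : 4 * y ^ 9 ≤ y ^ 4 := by
    have : 0 < y ^ 4 := by positivity
    nlinarith
  have hc := neg_one_le_cos (4 * π * a)
  have hc' := cos_le_one (4 * π * a)
  have : 0 < y ^ 4 := by positivity
  rw [abs_le] at h ⊢
  constructor <;> nlinarith

/-- dual expression -/
noncomputable def Bd (t : ℝ) : ℝ :=
  HurwitzZeta.cosKernel ((-1 / 3 : ℝ) : UnitAddCircle) (1 / (3 * t))
    * HurwitzZeta.cosKernel ((0 : ℝ) : UnitAddCircle) (1 / t)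
  + HurwitzZeta.cosKernel ((1 / 6 : ℝ) : UnitAddCircle) (1 / (3 * t))
    * HurwitzZeta.cosKernel ((1 / 2 : ℝ) : UnitAddCircle) (1 / t)

lemma prod_err {p q P Q a b A B : ℝ} (h1 : |p - P| ≤ a) (h2 : |q - Q| ≤ b)
    (hP : |P| ≤ A) (hQ : |Q| ≤ B) : |p * q - P * Q| ≤ a * B + b * A + a * b := by
  have : p * q - P * Q = (p - P) * Q + (q - Q) * P + (p - P) * (q - Q) := by ring
  rw [this]
  have ha := (abs_nonneg _).trans h1
  have hb := (abs_nonneg _).trans h2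
  refine (abs_add_three _ _ _).trans ?_
  rw [abs_mul, abs_mul, abs_mul]
  gcongr

lemma Bd_bound {t : ℝ} (ht : 0 < t) (hy : exp (-π / (3 * t)) ≤ 1 / 2) :
    |Bd t - (2 - 6 * exp (-π / (3 * t)) ^ 4)| ≤ 14 * exp (-π / (3 * t)) ^ 9 := by
  have e1 : -π * (1 / (3 * t)) = -π / (3 * t) := by ring
  have e3 : exp (-π * (1 / t)) = exp (-π / (3 * t)) ^ 3 := by
    rw [← exp_nat_mul]; congr 1; push_cast; field_simp
  have hy0 : 0 < exp (-π / (3 * t)) := exp_pos _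
  have hy3 : exp (-π / (3 * t)) ^ 3 ≤ (1 / 2) ^ 3 := by gcongr
  have k1 := cosK_bound (-1 / 3) (t := 1 / (3 * t)) (by positivity) (by rwa [e1])
  have k2 := cosK_bound' 0 (t := 1 / t) (by positivity) (by rw [e3]; linarith)
  have k3 := cosK_bound (1 / 6) (t := 1 / (3 * t)) (by positivity) (by rwa [e1])
  have k4 := cosK_bound' (1 / 2) (t := 1 / t) (by positivity) (by rw [e3]; linarith)
  rw [e1] at k1 k3
  rw [e3] at k2 k4
  unfold Bd
  set y := exp (-π / (3 * t)) with hyd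
  have c1 : cos (2 * π * (-1 / 3)) = -1 / 2 := by
    rw [show 2 * π * (-1 / 3) = -(π - π / 3) by ring, cos_neg, cos_pi_sub, cos_pi_div_three]
    norm_num
  have c2 : cos (4 * π * (-1 / 3)) = -1 / 2 := by
    rw [show 4 * π * (-1 / 3) = -(π / 3 + π) by ring, cos_neg, cos_add_pi, cos_pi_div_three]
    norm_num
  have c3 : cos (2 * π * (1 / 6)) = 1 / 2 := by
    rw [show 2 * π * (1 / 6) = π / 3 by ring, cos_pi_div_three]
  have c4 : cos (4 * π * (1 / 6)) = -1 / 2 := by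
    rw [show 4 * π * (1 / 6) = (π - π / 3) by ring, cos_pi_sub, cos_pi_div_three]
    norm_num
  have c5 : cos (2 * π * (1 / 2)) = -1 := by
    rw [show 2 * π * (1 / 2) = π by ring, cos_pi]
  rw [c1, c2] at k1
  rw [c3, c4] at k3
  rw [c5] at k4
  rw [mul_zero, cos_zero] at k2
  have y4 : y ^ 4 ≤ (1 / 2) ^ 4 := by gcongr
  have y3 : 0 < y ^ 3 := by positivity
  have y4' : 0 < y ^ 4 := by positivity
  have m1 := prod_err k1 k2 (A := 1) (B := 5 / 4)
    (by rw [abs_le]; constructor <;> linarith) (by rw [abs_le]; constructor <;> linarith)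
  have m2 := prod_err k3 k4 (A := 3 / 2) (B := 1)
    (by rw [abs_le]; constructor <;> linarith) (by rw [abs_le]; constructor <;> linarith)
  have y9 : 0 < y ^ 9 := by positivity
  have y12 : (y ^ 3) ^ 4 ≤ y ^ 9 * (1 / 8) := by
    rw [show (y ^ 3) ^ 4 = y ^ 9 * y ^ 3 by ring]; gcongr; linarith
  have y12s : (y ^ 3) ^ 4 ≤ 1 / 4096 := by
    calc (y ^ 3) ^ 4 ≤ ((1 / 2) ^ 3) ^ 4 := by gcongr
      _ = _ := by norm_num
  have y7 : y ^ 7 = y ^ 4 * y ^ 3 := by ring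
  rw [abs_le] at m1 m2 ⊢
  constructor <;> nlinarith

lemma Bd_lt {t : ℝ} (ht : 0 < t)
    (hz : exp (-π / (3 * t)) ≤ 1 / 4) : Bd (2 * t) < Bd t := by
  have e : exp (-π / (3 * t)) = exp (-π / (3 * (2 * t))) ^ 2 := by
    rw [← exp_nat_mul]; congr 1; push_cast; field_simp
  have hz0 : 0 < exp (-π / (3 * (2 * t))) := exp_pos _
  have hz' : exp (-π / (3 * (2 * t))) ≤ 1 / 2 := by
    rw [e] at hz; nlinarith
  have b1 := Bd_bound ht (by linarith)
  have b2 := Bd_bound (t := 2 * t) (by positivity) hz'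
  rw [e] at b1
  set z := exp (-π / (3 * (2 * t)))
  rw [abs_le] at b1 b2
  have z4 : 0 < z ^ 4 := by positivity
  have h5 : z ^ 5 ≤ (1 / 2) ^ 5 := by gcongr
  have h4 : z ^ 4 ≤ (1 / 2) ^ 4 := by gcongr
  have h14 : z ^ 14 ≤ (1 / 2) ^ 14 := by gcongr
  have a1 : (z ^ 2) ^ 4 ≤ z ^ 4 * (1 / 2) ^ 4 := by
    rw [show (z ^ 2) ^ 4 = z ^ 4 * z ^ 4 by ring]; gcongr
  have a2 : z ^ 9 ≤ z ^ 4 * (1 / 2) ^ 5 := by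
    rw [show z ^ 9 = z ^ 4 * z ^ 5 by ring]; gcongr
  have a3 : (z ^ 2) ^ 9 ≤ z ^ 4 * (1 / 2) ^ 14 := by
    rw [show (z ^ 2) ^ 9 = z ^ 4 * z ^ 14 by ring]; gcongr
  norm_num at a1 a2 a3
  linarith

open HurwitzZeta in
lemma hasSum_prod (a b : ℝ) {t : ℝ} (ht : 0 < t) :
    HasSum (fun p : ℤ × ℤ => exp (-(π * t) * (3 * (p.1 + a) ^ 2 + (p.2 + b) ^ 2)))
      (1 / (√3 * t) * (cosKernel a (1 / (3 * t)) * cosKernel b (1 / t))) := by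
  have h1 := hasSum_int_evenKernel a (t := 3 * t) (by positivity)
  have h2 := hasSum_int_evenKernel b ht
  have hs := h1.summable.mul_of_nonneg h2.summable (fun n => (exp_pos _).le)
    (fun n => (exp_pos _).le)
  have h := h1.mul h2 hs
  rw [evenKernel_functional_equation, evenKernel_functional_equation] at h
  have e1 : (fun p : ℤ × ℤ => exp (-(π * t) * (3 * (p.1 + a) ^ 2 + (p.2 + b) ^ 2)))
      = fun x : ℤ × ℤ => rexp (-π * (x.1 + a) ^ 2 * (3 * t)) * rexp (-π * (x.2 + b) ^ 2 * t) := by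
    funext p
    rw [← exp_add]; congr 1; ring
  have e2 : 1 / (√3 * t) * (cosKernel a (1 / (3 * t)) * cosKernel b (1 / t))
      = 1 / (3 * t) ^ (1 / 2 : ℝ) * cosKernel a (1 / (3 * t))
        * (1 / t ^ (1 / 2 : ℝ) * cosKernel b (1 / t)) := by
    rw [← sqrt_eq_rpow, ← sqrt_eq_rpow, sqrt_mul (by norm_num)]
    have : √3 * t = √3 * √t * √t := by rw [mul_assoc, mul_self_sqrt ht.le]
    rw [this, one_div, one_div (√3 * √t), one_div (√t), mul_inv (√3 * √t)]
    ring
  rw [e1, e2]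
  exact h

lemma hasSum_Q {t : ℝ} (ht : 0 < t) :
    HasSum (fun p : ℤ × ℤ => exp (-(π * t) * Q1 p.1 p.2)) (1 / (√3 * t) * Bd t) := by
  let f := fun p : ℤ × ℤ => exp (-(π * t) * Q1 p.1 p.2)
  let g0 : ℤ × ℤ → ℤ × ℤ := fun p => (p.1 + p.2, p.1 - p.2)
  let g1 : ℤ × ℤ → ℤ × ℤ := fun p => (p.1 + p.2 + 1, p.1 - p.2)
  have i0 : Function.Injective g0 := by
    rintro ⟨a, b⟩ ⟨c, d⟩ h
    simp only [g0, Prod.mk.injEq] at h ⊢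
    omega
  have i1 : Function.Injective g1 := by
    rintro ⟨a, b⟩ ⟨c, d⟩ h
    simp only [g1, Prod.mk.injEq] at h ⊢
    omega
  have hc : IsCompl (Set.range g0) (Set.range g1) := by
    constructor
    · rw [Set.disjoint_left]
      rintro _ ⟨⟨a, b⟩, rfl⟩ ⟨⟨c, d⟩, h⟩
      simp only [g0, g1, Prod.mk.injEq] at h
      omega
    · rw [codisjoint_iff]
      refine Set.eq_univ_iff_forall.mpr ?_
      rintro ⟨k, l⟩
      rcases Int.even_or_odd' (k + l) with ⟨c, h | h⟩
      · left
        refine ⟨(c, k - c), ?_⟩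
        simp only [g0, Prod.mk.injEq]
        omega
      · right
        refine ⟨(c, k - c - 1), ?_⟩
        simp only [g1, Prod.mk.injEq]
        omega
  have s0 := hasSum_prod (-1 / 3) 0 ht
  have s1 := hasSum_prod (1 / 6) (1 / 2) ht
  have e0 : (fun p : ℤ × ℤ => exp (-(π * t) * (3 * (p.1 + (-1 / 3 : ℝ)) ^ 2
      + (p.2 + (0 : ℝ)) ^ 2))) = f ∘ g0 := by
    funext p
    simp only [f, g0, Function.comp, Q1]
    congr 1; push_cast; ring
  have e1 : (fun p : ℤ × ℤ => exp (-(π * t) * (3 * (p.1 + (1 / 6 : ℝ)) ^ 2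
      + (p.2 + (1 / 2 : ℝ)) ^ 2))) = f ∘ g1 := by
    funext p
    simp only [f, g1, Function.comp, Q1]
    congr 1; push_cast; ring
  rw [e0] at s0
  rw [e1] at s1
  have := HasSum.add_isCompl hc (i0.hasSum_range_iff.mpr s0) (i1.hasSum_range_iff.mpr s1)
  rw [← mul_add] at this
  exact this

lemma Q1_ge (k l : ℤ) : 1 / 3 ≤ Q1 k l := by
  have h : (0 : ℤ) ≤ k ^ 2 + k * l + l ^ 2 - k - l := by
    rcases le_or_gt (k + l) 0 with h | h
    · nlinarith [sq_nonneg (k + l), sq_nonneg k, sq_nonneg l]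
    · have : (1 : ℤ) ≤ k + l := h
      by_cases h2 : k + l = 1
      · have : l = 1 - k := by omega
        subst this
        have : 0 ≤ k * (k - 1) := by
          rcases le_or_gt k 0 with h | h
          · nlinarith
          · exact mul_nonneg (by omega) (by omega)
        nlinarith
      · have : (2 : ℤ) ≤ k + l := by omega
        nlinarith [sq_nonneg (k - l)]
  have h' : (0 : ℝ) ≤ k ^ 2 + k * l + l ^ 2 - k - l := by exact_mod_cast h
  unfold Q1
  nlinarith

lemma main_t {t : ℝ} (ht : 0 < t) :
    2 * ∑' p : ℤ × ℤ, exp (-(π * (2 * t)) * Q1 p.1 p.2)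
      < ∑' p : ℤ × ℤ, exp (-(π * t) * Q1 p.1 p.2) := by
  have s1 := hasSum_Q ht
  have s2 := hasSum_Q (t := 2 * t) (by positivity)
  have hpi := pi_gt_three
  rcases lt_or_ge (log 2) (π * t / 3) with h | h
  · have s2' := s2.mul_left 2
    rw [← tsum_mul_left]
    have key : ∀ p : ℤ × ℤ, 2 * exp (-(π * (2 * t)) * Q1 p.1 p.2)
        < exp (-(π * t) * Q1 p.1 p.2) := by
      intro p
      have hq := Q1_ge p.1 p.2
      have hlt : exp (-(π * t) * Q1 p.1 p.2) < 1 / 2 := by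
        rw [← lt_log_iff_exp_lt (by norm_num), one_div, log_inv]
        have : 0 < π * t := by positivity
        nlinarith
      have hp := exp_pos (-(π * t) * Q1 p.1 p.2)
      rw [show -(π * (2 * t)) * Q1 p.1 p.2 = -(π * t) * Q1 p.1 p.2 + -(π * t) * Q1 p.1 p.2 by ring,
        exp_add]
      nlinarith
    exact Summable.tsum_lt_tsum (i := (0, 0)) (fun p => (key p).le) (key _)
      s2'.summable s1.summable
  · rw [s1.tsum_eq, s2.tsum_eq]
    have hz : exp (-π / (3 * t)) ≤ 1 / 4 := by
      rw [← le_log_iff_exp_le (by norm_num), one_div, log_inv,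
        show (4 : ℝ) = 2 ^ 2 by norm_num, log_pow, neg_div, neg_le_neg_iff,
        le_div_iff₀ (by positivity)]
      have hl := log_two_lt_d9
      have hl0 := log_two_gt_d9
      push_cast
      have h1 : t ≤ 0.6931471808 := by nlinarith
      nlinarith
    have hB := Bd_lt ht hz
    have h3 : 0 < √3 := by positivity
    have : 2 * (1 / (√3 * (2 * t)) * Bd (2 * t)) = 1 / (√3 * t) * Bd (2 * t) := by
      field_simp
    rw [this]
    gcongr

/-- For every `α > 0`, the Gaussian sum of the hexagonal lattice at its deep hole exceeds
the corresponding sum for the honeycomb structure at its deep hole. -/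
theorem hex_deepHole_sum_gt_honeycomb_deepHole_sum (α : ℝ) (hα : 0 < α) :
    (∑' p : ℤ × ℤ, Real.exp (-(2 * Real.pi * α / Real.sqrt 3) * Q1 p.1 p.2)) >
      2 * ∑' p : ℤ × ℤ, Real.exp (-(4 * Real.pi * α / Real.sqrt 3) * Q1 p.1 p.2) := by
  have ht : 0 < 2 * α / √3 := by positivity
  have h := main_t ht
  have e1 : π * (2 * α / √3) = 2 * π * α / √3 := by ring
  have e2 : π * (2 * (2 * α / √3)) = 4 * π * α / √3 := by ring
  rw [e1, e2] at h
  exact h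
end

section
/- For every α > 0, one has the identity ∑_{γ ∈ Γ₂} exp(−πα‖γ − 2√2·z₀‖²) = 2·∑_{(k,l) ∈ ℤ²} exp(−(4πα/√3)·((k−1/3)² + (k−1/3)(l−1/3) + (l−1/3)²)). -/
open Real MeasureTheory
open scoped RealInnerProductSpace ENNReal

noncomputable def hcPt (a b : ℝ) : EuclideanSpace ℝ (Fin 2) :=
  Real.sqrt 2 • (Real.sqrt (2 / Real.sqrt 3) • vec2 (a + b / 2) (b * (Real.sqrt 3 / 2)))

lemma hcPt_inj {a b a' b' : ℝ} (h : hcPt a b = hcPt a' b') : a = a' ∧ b = b' := by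
  have h3 : (0:ℝ) < Real.sqrt 3 := by positivity
  have hc : Real.sqrt (2 / Real.sqrt 3) ≠ 0 := by positivity
  have h2 : Real.sqrt 2 ≠ 0 := by positivity
  have h' := smul_right_injective _ hc (smul_right_injective _ h2 h)
  have e0 := congrArg (fun v : EuclideanSpace ℝ (Fin 2) => v 0) h'
  have e1 := congrArg (fun v : EuclideanSpace ℝ (Fin 2) => v 1) h'
  simp [vec2] at e0 e1
  have hb : b = b' := e1
  subst hb
  exact ⟨by linarith, rfl⟩

lemma hcPt_norm (a b : ℝ) :
    ‖hcPt a b‖ ^ 2 = 4 / Real.sqrt 3 * (a ^ 2 + a * b + b ^ 2) := by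
  have h3 : Real.sqrt 3 ^ 2 = 3 := Real.sq_sqrt (by norm_num)
  have h2 : Real.sqrt 2 ^ 2 = 2 := Real.sq_sqrt (by norm_num)
  have hc : Real.sqrt (2 / Real.sqrt 3) ^ 2 = 2 / Real.sqrt 3 := Real.sq_sqrt (by positivity)
  rw [hcPt, norm_smul, norm_smul, mul_pow, mul_pow, EuclideanSpace.norm_sq_eq]
  simp only [Real.norm_eq_abs, sq_abs, h2, hc, Fin.sum_univ_two]
  simp only [vec2, WithLp.equiv_symm_apply, Matrix.cons_val_zero, Matrix.cons_val_one]
  rw [mul_pow, div_pow (Real.sqrt 3), h3]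
  ring

lemma deepHole_eq_s4 : Real.sqrt 2 • deepHole = hcPt (1 / 3) (1 / 3) := by
  have h3 : Real.sqrt 3 * Real.sqrt 3 = 3 := Real.mul_self_sqrt (by norm_num)
  have h0 : Real.sqrt 3 ≠ 0 := by positivity
  rw [deepHole, hcPt]
  congr 3
  · norm_num
  · field_simp
    nlinarith

lemma hcPt_add (a b a' b' : ℝ) : hcPt a b + hcPt a' b' = hcPt (a + a') (b + b') := by
  ext i
  fin_cases i <;> simp [hcPt, vec2] <;> ring

lemma hcPt_sub (a b a' b' : ℝ) : hcPt a b - hcPt a' b' = hcPt (a - a') (b - b') := by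
  ext i
  fin_cases i <;> simp [hcPt, vec2] <;> ring

lemma two_deepHole_eq : (2 * Real.sqrt 2) • deepHole = hcPt (2 / 3) (2 / 3) := by
  rw [mul_smul, two_smul, deepHole_eq_s4, hcPt_add]
  norm_num

noncomputable def hcMap : (ℤ × ℤ) ⊕ (ℤ × ℤ) → EuclideanSpace ℝ (Fin 2)
  | Sum.inl p => hcPt ((1 - p.1 : ℤ) : ℝ) ((1 - p.2 : ℤ) : ℝ)
  | Sum.inr p => hcPt ((p.1 : ℝ) + 1 / 3) ((p.2 : ℝ) + 1 / 3)

lemma hcMap_aux (k l : ℤ) (h : (k : ℝ) = (l : ℝ) + 1 / 3) : False := by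
  have h1 : (3 * k : ℝ) = 3 * l + 1 := by linarith
  have h2 : 3 * k = 3 * l + 1 := by exact_mod_cast h1
  omega

lemma hcMap_inj : Function.Injective hcMap := by
  rintro (⟨k, l⟩ | ⟨k, l⟩) (⟨k', l'⟩ | ⟨k', l'⟩) h
  · obtain ⟨h1, h2⟩ := hcPt_inj h
    have h1 := Int.cast_injective h1
    have h2 := Int.cast_injective h2
    dsimp only at h1 h2
    rw [show k = k' by omega, show l = l' by omega]
  · exact (hcMap_aux _ _ (hcPt_inj h).1).elim
  · exact (hcMap_aux _ _ (hcPt_inj h).1.symm).elim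
  · obtain ⟨h1, h2⟩ := hcPt_inj h
    have h1 : k = k' := by exact_mod_cast add_right_cancel h1
    have h2 : l = l' := by exact_mod_cast add_right_cancel h2
    rw [h1, h2]

lemma hcMap_range : Set.range hcMap = honeycomb := by
  ext x
  constructor
  · rintro ⟨(⟨k, l⟩ | ⟨k, l⟩), rfl⟩
    · exact ⟨_, Or.inl ⟨1 - k, 1 - l, rfl⟩, rfl⟩
    · refine ⟨_, Or.inr ⟨_, ⟨k, l, rfl⟩, rfl⟩, ?_⟩
      dsimp only
      rw [smul_add, deepHole_eq_s4]
      exact hcPt_add _ _ _ _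
  · rintro ⟨_, (⟨k, l, rfl⟩ | ⟨_, ⟨k, l, rfl⟩, rfl⟩), rfl⟩
    · refine ⟨Sum.inl (1 - k, 1 - l), ?_⟩
      simp only [hcMap, sub_sub_cancel]
      rfl
    · refine ⟨Sum.inr (k, l), ?_⟩
      dsimp only
      rw [smul_add, deepHole_eq_s4]
      exact (hcPt_add _ _ _ _).symm

lemma tsum_sum_same {β : Type*} (G : β → ℝ) :
    ∑' s : β ⊕ β, Sum.elim G G s = 2 * ∑' p, G p := by
  by_cases hG : Summable G
  · have h := HasSum.sum (f := Sum.elim G G) hG.hasSum hG.hasSum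
    rw [h.tsum_eq, two_mul]
  · rw [tsum_eq_zero_of_not_summable hG, tsum_eq_zero_of_not_summable, mul_zero]
    intro h
    exact hG (h.comp_injective Sum.inl_injective)

/-- The Gaussian sum of the honeycomb structure `Γ₂` at its deep hole `2√2·z₀`,
rewritten over the integer lattice `ℤ²` by a linear change of coordinates. -/
theorem honeycomb_deepHole_sum_eq (α : ℝ) (hα : 0 < α) :
    (∑' g : honeycomb,
        Real.exp (-(Real.pi * α) *
          ‖(g : EuclideanSpace ℝ (Fin 2)) - (2 * Real.sqrt 2) • deepHole‖ ^ 2)) =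
      2 * ∑' p : ℤ × ℤ,
        Real.exp (-(4 * Real.pi * α / Real.sqrt 3) *
          (((p.1 : ℝ) - 1 / 3) ^ 2 + ((p.1 : ℝ) - 1 / 3) * ((p.2 : ℝ) - 1 / 3) +
            ((p.2 : ℝ) - 1 / 3) ^ 2)) := by
  rw [← tsum_sum_same]
  let e : (ℤ × ℤ) ⊕ (ℤ × ℤ) ≃ honeycomb :=
    (Equiv.ofInjective hcMap hcMap_inj).trans (Equiv.setCongr hcMap_range)
  rw [← e.tsum_eq]
  refine tsum_congr fun s => ?_
  have he : ((e s : honeycomb) : EuclideanSpace ℝ (Fin 2)) = hcMap s := rfl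
  rw [he, two_deepHole_eq]
  rcases s with ⟨k, l⟩ | ⟨k, l⟩
  · simp only [hcMap, Sum.elim_inl, hcPt_sub, hcPt_norm]
    push_cast
    congr 1
    ring
  · simp only [hcMap, Sum.elim_inr, hcPt_sub, hcPt_norm]
    congr 1
    ring
end

section
/- For every α > 0, the following theta transformation identity holds: α · ∑_{(k,l) ∈ ℤ²} exp(−(2πα/√3)·((k−1/3)² + (k−1/3)(l−1/3) + (l−1/3)²)) = ∑_{(k,l) ∈ ℤ²} exp(−(2π/(√3·α))·(k² + k·l + l²)) · cos(2π(k−l)/3). -/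
open Complex in
lemma aux_poisson (a : ℝ) (ha : 0 < a) (s t : ℝ) :
    ∑' n : ℤ, cexp (-Real.pi * a * (n + s) ^ 2 + 2 * Real.pi * I * t * n) =
      (1 / (√a : ℝ) : ℂ) * ∑' m : ℤ,
        cexp (-Real.pi / a * (m - t) ^ 2 + 2 * Real.pi * I * (m - t) * s) := by
  have h := Complex.tsum_exp_neg_quadratic (a := (a : ℂ)) (by simpa using ha) (-a * s + I * t)
  have hs : (a : ℂ) ^ (1 / 2 : ℂ) = ((√a : ℝ) : ℂ) := by
    rw [Real.sqrt_eq_rpow, Complex.ofReal_cpow ha.le]; norm_num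
  have ha' : (a : ℂ) ≠ 0 := by exact_mod_cast ha.ne'
  rw [hs] at h
  have h2 := congrArg (fun z => cexp (-Real.pi * a * s ^ 2) * z) h
  rw [← tsum_mul_left, mul_left_comm, ← tsum_mul_left] at h2
  convert! h2 using 1
  · congr 1; ext n; rw [← Complex.exp_add]; congr 1; ring
  · congr 2; ext m; rw [← Complex.exp_add]; congr 1
    field_simp
    ring_nf
    simp only [I_sq, I_pow_four, I_pow_three]
    ring

open Complex in
lemma aux_poisson' (a : ℝ) (ha : 0 < a) (s : ℝ) :
    ∑' n : ℤ, cexp (-Real.pi * a * (n + s) ^ 2) =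
      (1 / (√a : ℝ) : ℂ) * ∑' m : ℤ,
        cexp (-Real.pi / a * m ^ 2 - 2 * Real.pi * I * m * s) := by
  have h := aux_poisson a ha s 0
  rw [← (Equiv.neg ℤ).tsum_eq (fun m : ℤ => cexp (-Real.pi / a * (m - (0:ℝ)) ^ 2 + 2 * Real.pi * I * (m - (0:ℝ)) * s))] at h
  convert! h using 1
  · congr 1; ext n; congr 1; push_cast; ring
  · congr 2; ext m; congr 1; simp [Equiv.neg_apply]; ring

open Complex in
lemma aux_summable (c : ℝ) (hc : 0 < c) (s : ℝ) :
    Summable fun n : ℤ => Real.exp (-c * (n + s) ^ 2) := by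
  have h := (summable_jacobiTheta₂_term_iff (I * (c * s / Real.pi : ℝ)) (I * (c / Real.pi : ℝ))).2
    (by simp; positivity)
  have h2 := h.norm.mul_left (Real.exp (-c * s ^ 2))
  refine h2.congr fun n => ?_
  have hp := Real.pi_ne_zero
  have : (2 * Real.pi * I * n * (I * (c * s / Real.pi : ℝ)) + Real.pi * I * n ^ 2 * (I * (c / Real.pi : ℝ)) : ℂ)
      = ((-2 * c * s * n - c * n ^ 2 : ℝ) : ℂ) := by
    have : (Real.pi : ℂ) ≠ 0 := by exact_mod_cast hp
    push_cast; field_simp; ring_nf; simp only [I_sq]; ring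
  rw [jacobiTheta₂_term, this, Complex.norm_exp, ofReal_re, ← Real.exp_add]
  congr 1; ring

lemma aux_summable₂ (c d : ℝ) (hc : 0 < c) (hd : 0 < d) (s t : ℝ) :
    Summable fun p : ℤ × ℤ => Real.exp (-c * (p.1 + s) ^ 2 - d * (p.2 + t) ^ 2) := by
  refine ((aux_summable c hc s).mul_of_nonneg (aux_summable d hd t)
    (fun _ => (Real.exp_pos _).le) (fun _ => (Real.exp_pos _).le)).congr fun p => ?_
  rw [← Real.exp_add]; congr 1; ring

lemma aux_summable₃ (c : ℝ) (hc : 0 < c) (s : ℝ) :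
    Summable fun p : ℤ × ℤ => Real.exp (-c *
      ((p.1 + s) ^ 2 + (p.1 + s) * (p.2 + s) + (p.2 + s) ^ 2)) := by
  refine Summable.of_nonneg_of_le (fun _ => (Real.exp_pos _).le) (fun p => ?_)
    (aux_summable₂ (c / 2) (c / 2) (by positivity) (by positivity) s s)
  apply Real.exp_le_exp.2
  nlinarith [mul_nonneg hc.le (sq_nonneg ((p.1 + s : ℝ) + (p.2 + s)))]

open Complex in
/-- The theta transformation identity (Poisson summation for the Gaussian over the
hexagonal lattice of density 1 shifted by its deep hole). -/
lemma aux_main (α : ℝ) (hα : 0 < α) :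
    (α : ℂ) * ∑' p : ℤ × ℤ,
        ((Real.exp (-(2 * Real.pi * α / Real.sqrt 3) *
          (((p.1 : ℝ) - 1 / 3) ^ 2 + ((p.1 : ℝ) - 1 / 3) * ((p.2 : ℝ) - 1 / 3) +
            ((p.2 : ℝ) - 1 / 3) ^ 2)) : ℝ) : ℂ) =
      ∑' p : ℤ × ℤ,
        cexp (((-(2 * Real.pi / (Real.sqrt 3 * α)) *
            ((p.1 : ℝ) ^ 2 + (p.1 : ℝ) * (p.2 : ℝ) + (p.2 : ℝ) ^ 2) : ℝ) : ℂ) +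
          ((2 * Real.pi * ((p.1 : ℝ) - (p.2 : ℝ)) / 3 : ℝ) : ℂ) * I) ∧
    Summable (fun p : ℤ × ℤ =>
        cexp (((-(2 * Real.pi / (Real.sqrt 3 * α)) *
            ((p.1 : ℝ) ^ 2 + (p.1 : ℝ) * (p.2 : ℝ) + (p.2 : ℝ) ^ 2) : ℝ) : ℂ) +
          ((2 * Real.pi * ((p.1 : ℝ) - (p.2 : ℝ)) / 3 : ℝ) : ℂ) * I)) := by
  have hpi := Real.pi_pos
  set r : ℝ := √3 with hr
  have hr0 : 0 < r := by positivity
  have hr2 : r ^ 2 = 3 := Real.sq_sqrt (by norm_num)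
  have hr2c : (r : ℂ) ^ 2 = 3 := by exact_mod_cast hr2
  have hrc : (r : ℂ) ≠ 0 := by exact_mod_cast hr0.ne'
  have hαc : (α : ℂ) ≠ 0 := by exact_mod_cast hα.ne'
  have sF : Summable fun p : ℤ × ℤ => ((Real.exp (-(2 * Real.pi * α / r) *
          (((p.1 : ℝ) - 1 / 3) ^ 2 + ((p.1 : ℝ) - 1 / 3) * ((p.2 : ℝ) - 1 / 3) +
            ((p.2 : ℝ) - 1 / 3) ^ 2)) : ℝ) : ℂ) := by
    have := aux_summable₃ (2 * Real.pi * α / r) (by positivity) (-1 / 3)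
    refine (Complex.hasSum_ofReal.2 this.hasSum).summable.congr fun p => ?_
    congr 3; ring
  have sH : Summable (fun p : ℤ × ℤ =>
        cexp (((-(2 * Real.pi / (r * α)) *
            ((p.1 : ℝ) ^ 2 + (p.1 : ℝ) * (p.2 : ℝ) + (p.2 : ℝ) ^ 2) : ℝ) : ℂ) +
          ((2 * Real.pi * ((p.1 : ℝ) - (p.2 : ℝ)) / 3 : ℝ) : ℂ) * I)) := by
    have := aux_summable₃ (2 * Real.pi / (r * α)) (by positivity) 0
    refine Summable.of_norm (this.congr fun p => ?_)
    rw [Complex.exp_add, norm_mul, Complex.norm_exp_ofReal_mul_I, mul_one, Complex.norm_exp,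
      ofReal_re]
    simp
  refine ⟨?_, sH⟩
  set a : ℝ := 2 * α / r with ha
  set A : ℝ := r * α / 2 with hA
  have ha0 : 0 < a := by positivity
  have hA0 : 0 < A := by positivity
  have haA : √a * √A = α := by
    rw [← Real.sqrt_mul ha0.le, show a * A = α ^ 2 by rw [ha, hA]; field_simp, Real.sqrt_sq hα.le]
  let G : ℤ → ℤ → ℂ := fun k m => cexp (-Real.pi * A * (k + (-1/3 : ℝ)) ^ 2
    + (-Real.pi / a * m ^ 2 - 2 * Real.pi * I * m * ((k / 2 - 1 / 2 : ℝ) : ℂ)))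
  have sG : Summable (Function.uncurry G) := by
    have := aux_summable₂ (Real.pi * A) (Real.pi / a) (by positivity) (by positivity) (-1/3) 0
    refine Summable.of_norm (this.congr fun p => ?_)
    have e : (-Real.pi * A * (p.1 + (-1/3 : ℝ)) ^ 2
      + (-Real.pi / a * p.2 ^ 2 - 2 * Real.pi * I * p.2 * ((p.1 / 2 - 1 / 2 : ℝ) : ℂ)))
      = ((-(Real.pi * A) * (p.1 + (-1/3)) ^ 2 - (Real.pi / a) * (p.2 + 0) ^ 2 : ℝ) : ℂ)
       + ((-2 * Real.pi * p.2 * (p.1 / 2 - 1 / 2) : ℝ) : ℂ) * I := by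
      push_cast; ring
    simp only [Function.uncurry, G]
    rw [e, Complex.exp_add, norm_mul, Complex.norm_exp_ofReal_mul_I, mul_one, Complex.norm_exp,
      ofReal_re]
  have h1 : ∀ k : ℤ, ∑' l : ℤ, ((Real.exp (-(2 * Real.pi * α / r) *
          (((k : ℝ) - 1 / 3) ^ 2 + ((k : ℝ) - 1 / 3) * ((l : ℝ) - 1 / 3) +
            ((l : ℝ) - 1 / 3) ^ 2)) : ℝ) : ℂ) = (1 / (√a : ℝ) : ℂ) * ∑' m : ℤ, G k m := by
    intro k
    have h := congrArg (fun z => cexp (-Real.pi * A * (k + (-1/3 : ℝ)) ^ 2) * z)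
      (aux_poisson' a ha0 (k / 2 - 1 / 2))
    rw [← tsum_mul_left, mul_left_comm, ← tsum_mul_left] at h
    convert! h using 1
    · congr 1; ext l; rw [← Complex.exp_add, ofReal_exp]; congr 1
      rw [ha, hA]; push_cast
      field_simp
      rw [hr2c]; ring
    · congr 2; ext m; rw [← Complex.exp_add]
  have h2 : ∀ m : ℤ, ∑' k : ℤ, G k m = (1 / (√A : ℝ) : ℂ) * ∑' n : ℤ,
        cexp (((-(2 * Real.pi / (r * α)) *
            ((m : ℝ) ^ 2 + (m : ℝ) * (n : ℝ) + (n : ℝ) ^ 2) : ℝ) : ℂ) +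
          ((2 * Real.pi * ((m : ℝ) - (n : ℝ)) / 3 : ℝ) : ℂ) * I) := by
    intro m
    have h := congrArg (fun z => cexp (-Real.pi / a * m ^ 2 + Real.pi * I * m) * z)
      (aux_poisson A hA0 (-1/3) (-m / 2))
    rw [← tsum_mul_left, mul_left_comm, ← tsum_mul_left] at h
    convert! h using 1
    · congr 1; ext k; rw [← Complex.exp_add]; simp only [G]; congr 1
      push_cast; ring
    · congr 2; ext n; rw [← Complex.exp_add]; congr 1
      rw [ha, hA]; push_cast
      field_simp
      linear_combination (3 * (m : ℂ) ^ 2) * hr2c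
  rw [sF.tsum_prod, sH.tsum_prod]
  simp only [h1]
  rw [tsum_mul_left, ← sG.tsum_comm]
  simp only [h2]
  rw [tsum_mul_left]
  have haAc : (α : ℂ) = (√a : ℝ) * (√A : ℝ) := by exact_mod_cast haA.symm
  have e1 : ((√a : ℝ) : ℂ) ≠ 0 := by exact_mod_cast (Real.sqrt_pos.2 ha0).ne'
  have e2 : ((√A : ℝ) : ℂ) ≠ 0 := by exact_mod_cast (Real.sqrt_pos.2 hA0).ne'
  rw [← mul_assoc, ← mul_assoc, show (α : ℂ) * (1 / (√a : ℝ)) * (1 / (√A : ℝ)) = 1 by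
    rw [haAc]; field_simp, one_mul]


/-- The theta transformation identity (Poisson summation for the Gaussian over the
hexagonal lattice of density 1 shifted by its deep hole). -/
theorem theta_transformation (α : ℝ) (hα : 0 < α) :
    α * ∑' p : ℤ × ℤ,
        Real.exp (-(2 * Real.pi * α / Real.sqrt 3) *
          (((p.1 : ℝ) - 1 / 3) ^ 2 + ((p.1 : ℝ) - 1 / 3) * ((p.2 : ℝ) - 1 / 3) +
            ((p.2 : ℝ) - 1 / 3) ^ 2)) =
      ∑' p : ℤ × ℤ,
        Real.exp (-(2 * Real.pi / (Real.sqrt 3 * α)) *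
            ((p.1 : ℝ) ^ 2 + (p.1 : ℝ) * (p.2 : ℝ) + (p.2 : ℝ) ^ 2)) *
          Real.cos (2 * Real.pi * ((p.1 : ℝ) - (p.2 : ℝ)) / 3) := by
  obtain ⟨h, hs⟩ := aux_main α hα
  have h' := congrArg Complex.re h
  rw [Complex.re_tsum hs, ← Complex.ofReal_tsum, ← Complex.ofReal_mul, Complex.ofReal_re] at h'
  rw [h']
  congr 1
  ext p
  rw [Complex.exp_add, ← Complex.ofReal_exp, Complex.re_ofReal_mul, Complex.exp_ofReal_mul_I_re]
end

section
/- For every real q with 0 < q < 1 (more generally every complex q with |q| < 1), the cubic AGM identity 3·a(q³) = a(q) + 2·b(q) holds, where a(q) = ∑_{(k,l) ∈ ℤ²} q^{k²+kl+l²} and b(q) = ∑_{(k,l) ∈ ℤ²} q^{k²+kl+l²}·e^{2πi(k−l)/3}. -/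
open scoped Real

/-- The arithmetic component `a(q) = ∑_{(k,l) ∈ ℤ²} q^{k²+kl+l²}` of the cubic AGM. -/
noncomputable def cubicA (q : ℂ) : ℂ :=
  ∑' p : ℤ × ℤ, q ^ (p.1 ^ 2 + p.1 * p.2 + p.2 ^ 2)

/-- The component `b(q) = ∑_{(k,l) ∈ ℤ²} q^{k²+kl+l²}·e^{2πi(k−l)/3}` of the cubic AGM. -/
noncomputable def cubicB (q : ℂ) : ℂ :=
  ∑' p : ℤ × ℤ,
    q ^ (p.1 ^ 2 + p.1 * p.2 + p.2 ^ 2) *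
      Complex.exp (2 * (π : ℂ) * Complex.I * (((p.1 : ℂ) - (p.2 : ℂ)) / 3))

lemma aux_summable_natAbs (s : ℝ) (h0 : 0 ≤ s) (h1 : s < 1) :
    Summable (fun k : ℤ => s ^ k.natAbs) := by
  have h := summable_geometric_of_lt_one h0 h1
  apply Summable.of_nat_of_neg <;> simpa using h

lemma aux_summable_norm (q : ℂ) (hq : ‖q‖ < 1) :
    Summable (fun p : ℤ × ℤ => ‖q ^ (p.1 ^ 2 + p.1 * p.2 + p.2 ^ 2)‖) := by
  have hs0 : 0 ≤ √‖q‖ := Real.sqrt_nonneg _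
  have hs1 : √‖q‖ < 1 := by
    rw [Real.sqrt_lt' one_pos]; simpa using hq
  have h := aux_summable_natAbs _ hs0 hs1
  have h2 := h.mul_of_nonneg h (fun _ => pow_nonneg hs0 _) (fun _ => pow_nonneg hs0 _)
  refine Summable.of_nonneg_of_le (fun _ => norm_nonneg _) ?_ h2
  rintro ⟨k, l⟩
  have hQ : 0 ≤ k ^ 2 + k * l + l ^ 2 := by nlinarith [sq_nonneg (k + l), sq_nonneg k, sq_nonneg l]
  obtain ⟨n, hn⟩ := Int.eq_ofNat_of_zero_le hQ
  have hk : (k.natAbs : ℤ) ≤ k ^ 2 := Int.natAbs_le_self_sq k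
  have hl : (l.natAbs : ℤ) ≤ l ^ 2 := Int.natAbs_le_self_sq l
  have hle : k.natAbs + l.natAbs ≤ 2 * n := by
    zify
    rw [← hn]
    simp only [Int.natCast_natAbs] at hk hl
    nlinarith [sq_nonneg (k + l)]
  simp only
  rw [hn, zpow_natCast, norm_pow, ← pow_add]
  calc ‖q‖ ^ n = √‖q‖ ^ (2 * n) := by rw [pow_mul, Real.sq_sqrt (norm_nonneg _)]
    _ ≤ _ := pow_le_pow_of_le_one hs0 hs1.le hle

lemma aux_exp_int (m : ℤ) :
    Complex.exp (2 * (π : ℂ) * Complex.I * ((m : ℂ) / 3)) =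
      Complex.exp (2 * (π : ℂ) * Complex.I / 3) ^ m := by
  rw [← Complex.exp_int_mul]; congr 1; ring

lemma aux_norm_exp (m : ℤ) :
    ‖Complex.exp (2 * (π : ℂ) * Complex.I * ((m : ℂ) / 3))‖ = 1 := by
  have : 2 * (π : ℂ) * Complex.I * ((m : ℂ) / 3) = ((2 * π * (m / 3) : ℝ) : ℂ) * Complex.I := by
    push_cast; ring
  rw [this, Complex.norm_exp_ofReal_mul_I]

lemma aux_root_sum (m : ℤ) :
    1 + Complex.exp (2 * (π : ℂ) * Complex.I * ((m : ℂ) / 3)) +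
      Complex.exp (2 * (π : ℂ) * Complex.I * (((-m : ℤ) : ℂ) / 3)) = if 3 ∣ m then 3 else 0 := by
  rw [aux_exp_int, aux_exp_int]
  have hw : IsPrimitiveRoot (Complex.exp (2 * (π : ℂ) * Complex.I / 3)) 3 := by
    simpa using Complex.isPrimitiveRoot_exp 3 (by norm_num)
  set w := Complex.exp (2 * (π : ℂ) * Complex.I / 3) with hwdef
  have hw0 : w ≠ 0 := Complex.exp_ne_zero _
  have h3 : w ^ 3 = 1 := hw.pow_eq_one
  have hd : w ^ m = 1 ↔ 3 ∣ m := by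
    simpa using hw.zpow_eq_one_iff_dvd m
  have hx0 : w ^ m ≠ 0 := zpow_ne_zero _ hw0
  have hx3 : (w ^ m) ^ 3 = 1 := by
    rw [← zpow_natCast, ← zpow_mul, mul_comm, zpow_mul, zpow_natCast, h3, one_zpow]
  rw [zpow_neg]
  generalize w ^ m = x at *
  split_ifs with h
  · rw [hd.2 h]; norm_num
  · have hx1 : x - 1 ≠ 0 := fun e => h (hd.1 (sub_eq_zero.1 e))
    have : x ^ 2 + x + 1 = 0 := by
      apply mul_left_cancel₀ hx1; linear_combination hx3
    field_simp
    linear_combination this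

/-- The cubic AGM identity of Borwein and Borwein: `3a(q³) = a(q) + 2b(q)` for `|q| < 1`. -/
theorem cubicAGM_identity (q : ℂ) (hq : ‖q‖ < 1) :
    3 * cubicA (q ^ 3) = cubicA q + 2 * cubicB q := by
  have hN := aux_summable_norm q hq
  have hA := hN.of_norm
  let e : ℤ → ℂ := fun m => Complex.exp (2 * (π : ℂ) * Complex.I * ((m : ℂ) / 3))
  let Q : ℤ × ℤ → ℂ := fun p => q ^ (p.1 ^ 2 + p.1 * p.2 + p.2 ^ 2)
  have hBs : Summable (fun p : ℤ × ℤ => Q p * e (p.1 - p.2)) := by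
    refine Summable.of_norm (hN.congr fun p => ?_)
    simp only [Q, e, norm_mul, aux_norm_exp, mul_one]
  have hB : cubicB q = ∑' p : ℤ × ℤ, Q p * e (p.1 - p.2) := by
    simp only [cubicB, Q, e]; push_cast; rfl
  have hsw : (fun p : ℤ × ℤ => Q p * e (-(p.1 - p.2))) =
      (fun p : ℤ × ℤ => Q p * e (p.1 - p.2)) ∘ (Equiv.prodComm ℤ ℤ) := by
    funext ⟨k, l⟩
    simp only [Q, Function.comp, Equiv.prodComm_apply, Prod.swap_prod_mk, neg_sub]
    congr 2; ring
  have hBs' : Summable (fun p : ℤ × ℤ => Q p * e (-(p.1 - p.2))) := by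
    rw [hsw]; exact (Equiv.summable_iff _).2 hBs
  have hB' : cubicB q = ∑' p : ℤ × ℤ, Q p * e (-(p.1 - p.2)) := by
    rw [hsw, hB]
    exact ((Equiv.prodComm ℤ ℤ).tsum_eq (fun p : ℤ × ℤ => Q p * e (p.1 - p.2))).symm
  have hsum : cubicA q + 2 * cubicB q =
      ∑' p : ℤ × ℤ, Q p * (if 3 ∣ p.1 - p.2 then 3 else 0) := by
    have : cubicA q + 2 * cubicB q = cubicA q + cubicB q + cubicB q := by ring
    rw [this]
    nth_rewrite 2 [hB']
    rw [hB, cubicA, ← hA.tsum_add hBs, ← (hA.add hBs).tsum_add hBs']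
    refine tsum_congr fun p => ?_
    rw [← aux_root_sum]
    simp only [Q, e]; ring
  rw [hsum]
  let g : ℤ × ℤ → ℤ × ℤ := fun p => (p.1 + 2 * p.2, p.1 - p.2)
  have hg : Function.Injective g := by
    rintro ⟨a, b⟩ ⟨c, d⟩ h
    simp only [g, Prod.mk.injEq] at h ⊢
    omega
  rw [← hg.tsum_eq (f := fun p : ℤ × ℤ => Q p * (if 3 ∣ p.1 - p.2 then 3 else 0)), cubicA,
    ← tsum_mul_left]
  · refine tsum_congr fun p => ?_
    have h3 : (3 : ℤ) ∣ (g p).1 - (g p).2 := ⟨p.2, by simp only [g]; ring⟩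
    rw [if_pos h3, mul_comm]
    congr 1
    simp only [Q, g]
    rw [← zpow_natCast q 3, ← zpow_mul]
    congr 1
    push_cast; ring
  · rintro ⟨k, l⟩ hp
    have h3 : (3 : ℤ) ∣ k - l := by
      by_contra h
      simp [h] at hp
    obtain ⟨m, hm⟩ := h3
    refine ⟨(l + m, m), ?_⟩
    simp only [g, Prod.mk.injEq]
    omega
end
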